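/- arXiv:1308.3955 — 7 statements merged into one kernel-verified Lean document; each statement's English description precedes it below -/
import Mathlib

section
/- Let G = (A * B; H = K, φ) be the generalized free product of groups A and B with subgroups H ≤ A and K ≤ B amalgamated according to an isomorphism φ: H → K. Suppose H is a normal subgroup of A, K is a normal subgroup of B, and the groups H and K satisfy the maximum condition for subgroups. If A and B are subgroup separable, then G is subgroup separable. -/
/-- A subgroup `H` of a group `G` is finitely separable if for every `g ∈ G` with `g ∉ H`
there is a homomorphism of `G` onto a finite group under which the image of `g` does not
belong to the image of `H`. -/
def FinitelySeparable {G : Type*} [Group G] (H : Subgroup G) : Prop :=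
  ∀ g : G, g ∉ H →
    ∃ (Q : Type) (_ : Group Q) (_ : Finite Q) (f : G →* Q),
      Function.Surjective f ∧ f g ∉ H.map f

/-- A group is subgroup separable if all of its finitely generated subgroups are
finitely separable. -/
def SubgroupSeparable (G : Type*) [Group G] : Prop :=
  ∀ H : Subgroup G, H.FG → FinitelySeparable H

/-- A group satisfies the maximum condition for subgroups if every ascending chain of
subgroups stabilizes. -/
def MaxConditionOnSubgroups (G : Type*) [Group G] : Prop :=
  ∀ f : ℕ →o Subgroup G, ∃ n : ℕ, ∀ m : ℕ, n ≤ m → f m = f n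

/-- The two factors of the generalized free product, indexed by `Bool`. -/
abbrev amalgFactor (A B : Type) : Bool → Type
  | true => A
  | false => B

instance (A B : Type) [Group A] [Group B] : ∀ b, Group (amalgFactor A B b)
  | true => ‹Group A›
  | false => ‹Group B›

/-- The pair of maps identifying the amalgamated subgroup `H = K` inside the two factors:
the inclusion `H ↪ A` and the composition of `φ : H ≃ K` with the inclusion `K ↪ B`. -/
def amalgMaps {A B : Type} [Group A] [Group B] (H : Subgroup A) (K : Subgroup B)
    (φ : H ≃* K) : ∀ b, ↥H →* amalgFactor A B b
  | true => H.subtype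
  | false => K.subtype.comp φ.toMonoidHom

/-- The generalized free product `(A ∗ B; H = K, φ)`, i.e. the amalgamated free product
(pushout) of `A` and `B` over `H` identified with `K` via `φ`. -/
abbrev AmalgamatedProduct {A B : Type} [Group A] [Group B] (H : Subgroup A) (K : Subgroup B)
    (φ : H ≃* K) : Type :=
  Monoid.PushoutI (amalgMaps H K φ)

open Equiv in
lemma aux_reps {A Y : Type} [Group A] (ρ : A →* Perm Y) :
    ∃ (r : Y → Y) (u : Y → A), (∀ y, ρ (u y) (r y) = y) ∧ ∀ a y, r (ρ a y) = r y := by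
  let s : Setoid Y :=
    { r := fun x y => ∃ a, ρ a x = y
      iseqv := ⟨fun x => ⟨1, by simp⟩, by
        rintro x y ⟨a, rfl⟩
        exact ⟨a⁻¹, by simp⟩, by
        rintro x y z ⟨a, rfl⟩ ⟨b, rfl⟩
        exact ⟨b * a, by simp⟩⟩ }
  have h : ∀ y : Y, ∃ a, ρ a ((Quotient.mk s y).out) = y := fun y => Quotient.mk_out (s := s) y
  choose u hu using h
  refine ⟨fun y => (Quotient.mk s y).out, u, hu, fun a y => ?_⟩
  have : Quotient.mk s (ρ a y) = Quotient.mk s y :=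
    Quotient.sound (s := s) ⟨a⁻¹, by simp⟩
  simp only [this]

lemma aux_key {C X : Type} [Group C] (L : Subgroup C) (σ : C →* Equiv.Perm X)
    (hσ : ∀ x c, σ c x = x ↔ c ∈ L) (c c' : C) (x : X) :
    σ c x = σ c' x ↔ (c : C ⧸ L) = c' := by
  rw [QuotientGroup.eq, ← hσ x, map_mul, map_inv, Equiv.Perm.mul_apply, Equiv.Perm.inv_eq_iff_eq]
  exact eq_comm

lemma aux_free {C X : Type} [Group C] (L : Subgroup C) (σ : C →* Equiv.Perm X)
    (hσ : ∀ x c, σ c x = x ↔ c ∈ L) (U : Set X) (hU : ∀ c, ∀ x ∈ U, σ c x ∈ U) :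
    ∃ (Ω : Set X) (f : Ω × (C ⧸ L) → X), Function.Injective f ∧ Set.range f = U ∧
      ∀ (c : C) ω q, f (ω, c • q) = σ c (f (ω, q)) := by
  obtain ⟨r, u, hu, hr⟩ := aux_reps σ
  have hrr : ∀ y, r (r y) = r y := fun y => by
    conv_rhs => rw [← hu y]
    rw [hr]
  refine ⟨{x | x ∈ U ∧ r x = x}, fun p => σ p.2.out p.1, ?_, ?_, ?_⟩
  · rintro ⟨⟨x, hx, hx'⟩, q⟩ ⟨⟨y, hy, hy'⟩, q'⟩ h
    simp only at h
    have hxy : x = y := by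
      have := congrArg r h
      rwa [hr, hr, hx', hy'] at this
    subst hxy
    rw [aux_key L σ hσ] at h
    simp at h
    simp [h]
  · ext x
    constructor
    · rintro ⟨⟨⟨x, hx, hx'⟩, q⟩, rfl⟩
      exact hU _ _ hx
    · intro hx
      refine ⟨⟨⟨r x, ?_, hrr x⟩, (u x : C ⧸ L)⟩, ?_⟩
      · have := hU (u x)⁻¹ x hx
        rwa [map_inv, Equiv.Perm.inv_eq_iff_eq.mpr (hu x).symm] at this
      · simp only
        conv_rhs => rw [← hu x]
        rw [aux_key L σ hσ]
        simp
  · intro c ω q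
    simp only
    rw [← Equiv.Perm.mul_apply, ← map_mul, aux_key L σ hσ]
    simp only [QuotientGroup.out_eq']
    conv_lhs => rw [← QuotientGroup.out_eq' q]
    rfl

lemma aux_match {C XA XB S : Type} [Group C] [Finite XA] [Finite XB] (L : Subgroup C)
    [L.FiniteIndex]
    (σA : C →* Equiv.Perm XA) (hσA : ∀ x c, σA c x = x ↔ c ∈ L)
    (σB : C →* Equiv.Perm XB) (hσB : ∀ x c, σB c x = x ↔ c ∈ L)
    (hcard : Nat.card XA = Nat.card XB)
    (act : C → S → S) (iA : S → XA) (iB : S → XB)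
    (hiA : Function.Injective iA) (hiB : Function.Injective iB)
    (heA : ∀ c s, iA (act c s) = σA c (iA s)) (heB : ∀ c s, iB (act c s) = σB c (iB s)) :
    ∃ e : XA ≃ XB, (∀ c x, e (σA c x) = σB c (e x)) ∧ ∀ s, e (iA s) = iB s := by
  have main : ∀ (X : Type) (σ : C →* Equiv.Perm X) (hσ : ∀ x c, σ c x = x ↔ c ∈ L)
      (i : S → X) (hi : Function.Injective i) (he : ∀ c s, i (act c s) = σ c (i s)),
      ∃ (Ω : Set X) (f : S ⊕ (Ω × (C ⧸ L)) ≃ X), (∀ s, f (Sum.inl s) = i s) ∧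
        ∀ c ω q, f (Sum.inr (ω, c • q)) = σ c (f (Sum.inr (ω, q))) := by
    intro X σ hσ i hi he
    obtain ⟨Ω, f, hf, hfr, hfe⟩ := aux_free L σ hσ (Set.range i)ᶜ (by
      rintro c x hx ⟨s, hs⟩
      refine hx ⟨act c⁻¹ s, ?_⟩
      rw [he, hs]; simp)
    refine ⟨Ω, Equiv.ofBijective (Sum.elim i f) ⟨?_, ?_⟩, fun s => rfl, fun c ω q => hfe c ω q⟩
    · refine hi.sumElim hf ?_
      intro a b hab
      have : f b ∈ (Set.range i)ᶜ := hfr ▸ Set.mem_range_self b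
      exact this ⟨a, hab⟩
    · intro x
      by_cases hx : x ∈ Set.range i
      · obtain ⟨s, rfl⟩ := hx
        exact ⟨Sum.inl s, rfl⟩
      · have : x ∈ Set.range f := by rw [hfr]; exact hx
        obtain ⟨p, rfl⟩ := this
        exact ⟨Sum.inr p, rfl⟩
  obtain ⟨ΩA, fA, hA1, hA2⟩ := main XA σA hσA iA hiA heA
  obtain ⟨ΩB, fB, hB1, hB2⟩ := main XB σB hσB iB hiB heB
  have : Finite S := Finite.of_injective iA hiA
  have : Finite (C ⧸ L) := inferInstance
  have hc : Nat.card ΩA = Nat.card ΩB := by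
    rw [← Nat.card_congr fA, ← Nat.card_congr fB, Nat.card_sum, Nat.card_sum, Nat.card_prod,
      Nat.card_prod] at hcard
    exact Nat.eq_of_mul_eq_mul_right Nat.card_pos (Nat.add_left_cancel hcard)
  obtain ⟨w⟩ : Nonempty (ΩA ≃ ΩB) := ⟨(Finite.equivFinOfCardEq hc).trans (Finite.equivFin ΩB).symm⟩
  let e : XA ≃ XB := fA.symm.trans ((Equiv.sumCongr (Equiv.refl S)
    (Equiv.prodCongr w (Equiv.refl _))).trans fB)
  have e1 : ∀ s, e (iA s) = iB s := by
    intro s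
    simp [e, ← hA1, ← hB1]
  have e2 : ∀ ω q, e (fA (Sum.inr (ω, q))) = fB (Sum.inr (w ω, q)) := by
    intro ω q; simp [e]
  refine ⟨e, fun c x => ?_, e1⟩
  obtain ⟨p, rfl⟩ := fA.surjective x
  rcases p with s | ⟨ω, q⟩
  · rw [hA1, ← heA, e1, e1, heB]
  · rw [← hA2, e2, e2, hB2]

lemma aux_sep {A : Type} [Group A] (hA : SubgroupSeparable A) (P : Subgroup A) (hP : P.FG)
    (D : Set A) (hD : D.Finite) (hDP : ∀ d ∈ D, d ∉ P) :
    ∃ Q : Subgroup A, Q.FiniteIndex ∧ P ≤ Q ∧ ∀ d ∈ D, d ∉ Q := by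
  induction D, hD using Set.Finite.induction_on with
  | empty => exact ⟨⊤, inferInstance, le_top, by simp⟩
  | insert _ _ ih =>
    rename_i d s hds hs
    obtain ⟨Q, hQ, hPQ, hQs⟩ := ih (fun x hx => hDP x (Set.mem_insert_of_mem _ hx))
    obtain ⟨R, _, _, f, hf, hfd⟩ := hA P hP d (hDP d (Set.mem_insert _ _))
    have : (P.map f).FiniteIndex := inferInstance
    have : ((P.map f).comap f).FiniteIndex := ⟨by
      rw [Subgroup.index_comap_of_surjective _ hf]; exact Subgroup.FiniteIndex.index_ne_zero⟩
    refine ⟨Q ⊓ (P.map f).comap f, inferInstance, le_inf hPQ (Subgroup.le_comap_map f P), ?_⟩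
    intro x hx hxQ
    rcases hx with rfl | hx
    · exact hfd hxQ.2
    · exact hQs x hx hxQ.1

lemma aux_local {A C Y : Type} [Group A] [Group C] (hA : SubgroupSeparable A) (j : C →* A)
    (L : Subgroup C) (hL : L.FG) [L.FiniteIndex]
    (hN : ∀ a c, ∃ c', j c' = a * j c * a⁻¹ ∧ (c' ∈ L ↔ c ∈ L))
    (ρ : A →* Equiv.Perm Y) (hρ : ∀ y c, ρ (j c) y = y ↔ c ∈ L)
    (S : Set Y) (hS : S.Finite) (F : Set A) (hF : F.Finite) :
    ∃ (X : Type) (_ : Finite X) (ρ' : A →* Equiv.Perm X) (i : S → X), Function.Injective i ∧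
      (∀ a ∈ F, ∀ s s' : S, ρ a s = s' → i s' = ρ' a (i s)) ∧
      (∀ c, ∀ s s' : S, ρ (j c) s = s' → i s' = ρ' (j c) (i s)) ∧
      (∀ x c, ρ' (j c) x = x ↔ c ∈ L) := by
  let T : Set C := Set.range (Quotient.out : C ⧸ L → C)
  have hT : T.Finite :=
    have : Finite (C ⧸ L) := inferInstance
    Set.finite_range (ι := C ⧸ L) _
  have hTL : ∀ c : C, ∃ t ∈ T, ∃ l ∈ L, c = t * l := by
    intro c
    refine ⟨Quotient.out (c : C ⧸ L), ⟨_, rfl⟩, (Quotient.out (c : C ⧸ L))⁻¹ * c, ?_, by simp⟩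
    rw [← QuotientGroup.eq]; simp
  obtain ⟨r, u, hu, hr⟩ := aux_reps ρ
  let F' : Set A := F ∪ j '' T
  have hF' : F'.Finite := hF.union (hT.image _)
  let P : Y → Subgroup A := fun ω =>
    Subgroup.closure ((fun p : A × Y => (u (ρ p.1 p.2))⁻¹ * p.1 * u p.2) ''
      {p ∈ F' ×ˢ S | r p.2 = ω}) ⊔ L.map j
  have hPfg : ∀ ω, (P ω).FG := by
    intro ω
    refine Subgroup.FG.sup ?_ ?_
    swap
    · classical
      obtain ⟨s, hs⟩ := hL
      exact ⟨s.image j, by rw [Finset.coe_image, ← MonoidHom.map_closure, hs]⟩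
    refine (Subgroup.fg_iff _).2 ⟨_, rfl, ?_⟩
    exact ((hF'.prod hS).subset (Set.sep_subset _ _)).image _
  have hPst : ∀ ω, ∀ a ∈ P ω, ρ a ω = ω := by
    intro ω
    let St : Subgroup A := (MulAction.stabilizer (Equiv.Perm Y) ω).comap ρ
    suffices P ω ≤ St from fun a ha => this ha
    refine sup_le ((Subgroup.closure_le _).2 ?_) ?_
    · rintro _ ⟨⟨a, y⟩, ⟨-, h⟩, rfl⟩
      change ρ _ ω = ω
      simp only at h ⊢
      subst h
      rw [map_mul, map_mul, map_inv, Equiv.Perm.mul_apply, Equiv.Perm.mul_apply, hu,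
        Equiv.Perm.inv_eq_iff_eq]
      conv_lhs => rw [← hu (ρ a y), hr]
    · rintro _ ⟨c, hc, rfl⟩
      exact (hρ ω c).2 hc
  let D : Y → Set A := fun ω =>
    ((fun p : Y × Y => (u p.1)⁻¹ * u p.2) '' {p ∈ S ×ˢ S | (r p.1 = ω ∧ r p.2 = ω) ∧ p.1 ≠ p.2})
      ∪ j '' (T \ L)
  have hDf : ∀ ω, (D ω).Finite := fun ω =>
    (((hS.prod hS).subset (Set.sep_subset _ _)).image _).union ((hT.sdiff).image _)
  have hDP : ∀ ω, ∀ d ∈ D ω, d ∉ P ω := by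
    rintro ω d hd hdP
    have h := hPst ω d hdP
    rcases hd with ⟨⟨s, t⟩, ⟨-, ⟨h1, h2⟩, h3⟩, rfl⟩ | ⟨c, ⟨-, hc⟩, rfl⟩
    · simp only at h1 h2 h3 h
      rw [map_mul, map_inv, Equiv.Perm.mul_apply, Equiv.Perm.inv_eq_iff_eq] at h
      have e1 := hu s
      have e2 := hu t
      rw [h1] at e1
      rw [h2] at e2
      exact h3 (by rw [← e1, ← e2, h])
    · exact hc ((hρ ω c).1 h)
  choose Q hQf hPQ hQD using fun ω => aux_sep hA (P ω) (hPfg ω) (D ω) (hDf ω) (hDP ω)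
  have hQL : ∀ ω c, j c ∈ Q ω ↔ c ∈ L := by
    intro ω c
    have hLQ : ∀ l ∈ L, j l ∈ Q ω := fun l hl =>
      hPQ ω (Subgroup.mem_sup_right (Subgroup.mem_map_of_mem j hl))
    refine ⟨fun h => ?_, hLQ c⟩
    obtain ⟨t, ht, l, hl, rfl⟩ := hTL c
    rw [map_mul, Subgroup.mul_mem_cancel_right _ (hLQ l hl)] at h
    by_contra hc
    refine hQD ω (j t) (Or.inr ⟨t, ⟨ht, fun htL => hc (L.mul_mem htL hl)⟩, rfl⟩) h
  have : Finite (r '' S) := (hS.image r)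
  let X := Σ ω : (r '' S), A ⧸ Q ω.1
  let ρ' : A →* Equiv.Perm X := MulAction.toPermHom A X
  let i : S → X := fun s => ⟨⟨r s, s, s.2, rfl⟩, (u s : A ⧸ Q (r s))⟩
  have hstab : ∀ x c, ρ' (j c) x = x ↔ c ∈ L := by
    rintro ⟨⟨ω, hω⟩, q⟩ c
    obtain ⟨a, rfl⟩ := QuotientGroup.mk_surjective q
    have : ρ' (j c) ⟨⟨ω, hω⟩, (a : A ⧸ Q ω)⟩ = ⟨⟨ω, hω⟩, ((j c * a : A) : A ⧸ Q ω)⟩ := rfl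
    rw [this]
    have h3 : ((⟨⟨ω, hω⟩, ((j c * a : A) : A ⧸ Q ω)⟩ : X) = ⟨⟨ω, hω⟩, (a : A ⧸ Q ω)⟩) ↔
        ((j c * a : A) : A ⧸ Q ω) = (a : A ⧸ Q ω) := by
      constructor
      · intro h
        simpa [X] using h
      · intro h
        rw [h]
    refine h3.trans ?_
    rw [eq_comm, QuotientGroup.eq]
    obtain ⟨c', hc', hcc⟩ := hN a⁻¹ c
    rw [← hcc, ← hQL ω, hc', inv_inv, mul_assoc]
  have hedge : ∀ a ∈ F', ∀ s s' : S, ρ a s = s' → i s' = ρ' a (i s) := by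
    rintro a ha ⟨s, hs⟩ ⟨s', hs'⟩ h
    simp only at h
    subst h
    have : ρ' a (i ⟨s, hs⟩) = ⟨⟨r s, s, hs, rfl⟩, ((a * u s : A) : A ⧸ Q (r s))⟩ := rfl
    rw [this]
    have h2 : i ⟨ρ a s, hs'⟩ = ⟨⟨r s, s, hs, rfl⟩, ((u (ρ a s) : A) : A ⧸ Q (r s))⟩ := by
      have : ∀ (ω : Y) (h1 : ω ∈ r '' S) (e : ω = r s) (b : A),
        (⟨⟨ω, h1⟩, (b : A ⧸ Q ω)⟩ : X) = ⟨⟨r s, s, hs, rfl⟩, (b : A ⧸ Q (r s))⟩ := by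
        rintro ω h1 rfl b
        rfl
      exact this _ _ (hr a s) _
    rw [h2]
    congr 1
    rw [QuotientGroup.eq, ← mul_assoc]
    apply hPQ
    exact Subgroup.mem_sup_left (Subgroup.subset_closure ⟨(a, s), ⟨⟨ha, hs⟩, rfl⟩, rfl⟩)
  refine ⟨X, inferInstance, ρ', i, ?_, fun a ha => hedge a (Or.inl ha), ?_, hstab⟩
  · rintro ⟨s, hs⟩ ⟨t, ht⟩ h
    by_contra hne
    have hne' : s ≠ t := fun h => hne (Subtype.ext h)
    have hrr : r s = r t := congrArg (fun x : X => (x.1 : Y)) h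
    have h' : ∀ (ω : Y) (h1 : ω ∈ r '' S) (e : ω = r t) (b : A),
        (⟨⟨ω, h1⟩, (b : A ⧸ Q ω)⟩ : X) = ⟨⟨r t, t, ht, rfl⟩, (u t : A ⧸ Q (r t))⟩ →
        b⁻¹ * u t ∈ Q (r t) := by
      rintro ω h1 rfl b h
      exact QuotientGroup.eq.1 (by simpa [X] using h)
    refine hQD (r t) _ (Or.inl ⟨(s, t), ⟨⟨hs, ht⟩, ⟨hrr, rfl⟩, hne'⟩, rfl⟩) (h' _ _ hrr _ h)
  · intro c s s' h
    obtain ⟨t, ht, l, hl, rfl⟩ := hTL c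
    rw [map_mul, map_mul, Equiv.Perm.mul_apply, (hρ _ l).2 hl] at h
    rw [map_mul, map_mul, Equiv.Perm.mul_apply, (hstab _ l).2 hl]
    exact hedge _ (Or.inr ⟨t, ht, rfl⟩) s s' h

lemma aux_main {A B C G Y : Type} [Group A] [Group B] [Group C] [Group G]
    (hA : SubgroupSeparable A) (hB : SubgroupSeparable B) (jA : C →* A) (jB : C →* B)
    (α : A →* G) (β : B →* G) (hαβ : ∀ c, α (jA c) = β (jB c))
    (hlift : ∀ (X : Type) (f : A →* Equiv.Perm X) (g : B →* Equiv.Perm X),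
      (∀ c, f (jA c) = g (jB c)) →
      ∃ k : G →* Equiv.Perm X, (∀ a, k (α a) = f a) ∧ ∀ b, k (β b) = g b)
    (L : Subgroup C) (hL : L.FG) [L.FiniteIndex]
    (hNA : ∀ a c, ∃ c', jA c' = a * jA c * a⁻¹ ∧ (c' ∈ L ↔ c ∈ L))
    (hNB : ∀ a c, ∃ c', jB c' = a * jB c * a⁻¹ ∧ (c' ∈ L ↔ c ∈ L))
    (ρ : G →* Equiv.Perm Y) (hρ : ∀ y c, ρ (α (jA c)) y = y ↔ c ∈ L)
    (S₀ : Set Y) (hS₀ : S₀.Finite) (hne : S₀.Nonempty)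
    (FA : Set A) (hFA : FA.Finite) (FB : Set B) (hFB : FB.Finite) :
    ∃ (X : Type) (_ : Finite X) (ρ' : G →* Equiv.Perm X) (i : Y → X), Set.InjOn i S₀ ∧
      (∀ a ∈ FA, ∀ s ∈ S₀, ρ (α a) s ∈ S₀ → i (ρ (α a) s) = ρ' (α a) (i s)) ∧
      (∀ b ∈ FB, ∀ s ∈ S₀, ρ (β b) s ∈ S₀ → i (ρ (β b) s) = ρ' (β b) (i s)) ∧
      (∀ x c, ρ' (α (jA c)) x = x ↔ c ∈ L) := by
  classical
  let σ : C →* Equiv.Perm Y := ρ.comp (α.comp jA)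
  have hσ : ∀ y c, σ c y = y ↔ c ∈ L := hρ
  let S : Set Y := {y | ∃ c, ∃ s ∈ S₀, σ c s = y}
  have hS₀S : S₀ ⊆ S := fun s hs => ⟨1, s, hs, by simp⟩
  have hS : S.Finite := by
    have : Finite (C ⧸ L) := inferInstance
    refine ((Set.finite_univ (α := C ⧸ L)).image2 (fun q s => σ q.out s) hS₀).subset ?_
    rintro _ ⟨c, s, hs, rfl⟩
    refine ⟨(c : C ⧸ L), trivial, s, hs, ?_⟩
    simp only
    rw [aux_key L σ hσ]; simp
  let act : C → S → S := fun c s => ⟨σ c s, by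
    obtain ⟨_, c', s', hs', rfl⟩ := s
    exact ⟨c * c', s', hs', by simp⟩⟩
  obtain ⟨XA, _, ρA, iA, hiA, hFA', hCA, hstA⟩ :=
    aux_local hA jA L hL hNA (ρ.comp α) hρ S hS FA hFA
  obtain ⟨XB, _, ρB, iB, hiB, hFB', hCB, hstB⟩ :=
    aux_local hB jB L hL hNB (ρ.comp β) (fun y c => by
      rw [← hρ y c, hαβ]; rfl) S hS FB hFB
  obtain ⟨s₀, hs₀⟩ := hne
  let p₀ : S := ⟨s₀, hS₀S hs₀⟩
  let lA : Equiv.Perm XA →* Equiv.Perm (XA × XB) :=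
    { toFun := fun e => Equiv.prodCongr e (Equiv.refl _)
      map_one' := by ext x <;> rfl
      map_mul' := fun a b => by ext x <;> rfl }
  let lB : Equiv.Perm XB →* Equiv.Perm (XA × XB) :=
    { toFun := fun e => Equiv.prodCongr (Equiv.refl _) e
      map_one' := by ext x <;> rfl
      map_mul' := fun a b => by ext x <;> rfl }
  have hlA : ∀ e x y, lA e (x, y) = (e x, y) := fun _ _ _ => rfl
  have hlB : ∀ e x y, lB e (x, y) = (x, e y) := fun _ _ _ => rfl
  have hsA : ∀ x c, lA (ρA (jA c)) x = x ↔ c ∈ L := by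
    rintro ⟨x, y⟩ c
    rw [hlA, Prod.mk.injEq, hstA]; simp
  have hsB : ∀ x c, lB (ρB (jB c)) x = x ↔ c ∈ L := by
    rintro ⟨x, y⟩ c
    rw [hlB, Prod.mk.injEq, hstB]; simp
  obtain ⟨e, he, hei⟩ := aux_match (S := S) L (lA.comp (ρA.comp jA)) hsA
    (lB.comp (ρB.comp jB)) hsB rfl act
    (fun s => (iA s, iB p₀)) (fun s => (iA p₀, iB s))
    (fun s t h => hiA (congrArg Prod.fst h)) (fun s t h => hiB (congrArg Prod.snd h))
    (fun c s => by
      change (iA (act c s), iB p₀) = lA (ρA (jA c)) (iA s, iB p₀)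
      rw [hlA, hCA c s (act c s) rfl])
    (fun c s => by
      change (iA p₀, iB (act c s)) = lB (ρB (jB c)) (iA p₀, iB s)
      rw [hlB, hCB c s (act c s) (by
        change ρ (β (jB c)) s = ρ (α (jA c)) s
        rw [hαβ])])
  obtain ⟨k, hkA, hkB⟩ := hlift (XA × XB) (lA.comp ρA)
    ((e.symm.permCongrHom.toMonoidHom.comp lB).comp ρB) (by
      intro c
      ext1 x
      have := he c x
      rw [← Equiv.eq_symm_apply] at this
      exact this)
  have hkB' : ∀ b x, k (β b) x = e.symm (lB (ρB b) (e x)) := by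
    intro b x; rw [hkB]; rfl
  have hkA' : ∀ a x, k (α a) x = lA (ρA a) x := by
    intro a x; rw [hkA]; rfl
  let i : Y → XA × XB := fun y => if h : y ∈ S then (iA ⟨y, h⟩, iB p₀) else (iA p₀, iB p₀)
  have hi : ∀ y (h : y ∈ S), i y = (iA ⟨y, h⟩, iB p₀) := fun y h => by simp [i, h]
  refine ⟨XA × XB, inferInstance, k, i, ?_, ?_, ?_, ?_⟩
  · intro s hs t ht h
    rw [hi s (hS₀S hs), hi t (hS₀S ht), Prod.mk.injEq] at h
    exact congrArg Subtype.val (hiA h.1)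
  · intro a ha s hs hs'
    rw [hi s (hS₀S hs), hi _ (hS₀S hs'), hkA', hlA,
      hFA' a ha ⟨s, hS₀S hs⟩ ⟨ρ (α a) s, hS₀S hs'⟩ rfl]
  · intro b hb s hs hs'
    rw [hi s (hS₀S hs), hi _ (hS₀S hs'), hkB', Equiv.eq_symm_apply]
    have h1 := hei ⟨s, hS₀S hs⟩
    have h2 := hei ⟨ρ (β b) s, hS₀S hs'⟩
    rw [h1, h2, hlB, hFB' b hb ⟨s, hS₀S hs⟩ ⟨ρ (β b) s, hS₀S hs'⟩ rfl]
  · intro x c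
    rw [hkA']
    exact hsA x c

/-- Every element of `G` is controlled by finitely many letters. -/
lemma aux_word {A B G Y : Type} [Group A] [Group B] [Group G]
    (α : A →* G) (β : B →* G)
    (hgen : ∀ p : G → Prop, (∀ a, p (α a)) → (∀ b, p (β b)) →
      (∀ x y, p x → p y → p (x * y)) → ∀ g, p g)
    (ρ : G →* Equiv.Perm Y) (g : G) : ∀ S₀ : Set Y, S₀.Finite →
    ∃ (S : Set Y) (FA : Set A) (FB : Set B), S.Finite ∧ FA.Finite ∧ FB.Finite ∧
      ∀ (X : Type) (ρ' : G →* Equiv.Perm X) (i : Y → X),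
      (∀ a ∈ FA, ∀ s ∈ S, ρ (α a) s ∈ S → i (ρ (α a) s) = ρ' (α a) (i s)) →
      (∀ b ∈ FB, ∀ s ∈ S, ρ (β b) s ∈ S → i (ρ (β b) s) = ρ' (β b) (i s)) →
      ∀ s ∈ S₀, i (ρ g s) = ρ' g (i s) := by
  refine hgen (fun g => ∀ S₀ : Set Y, S₀.Finite →
    ∃ (S : Set Y) (FA : Set A) (FB : Set B), S.Finite ∧ FA.Finite ∧ FB.Finite ∧
      ∀ (X : Type) (ρ' : G →* Equiv.Perm X) (i : Y → X),
      (∀ a ∈ FA, ∀ s ∈ S, ρ (α a) s ∈ S → i (ρ (α a) s) = ρ' (α a) (i s)) →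
      (∀ b ∈ FB, ∀ s ∈ S, ρ (β b) s ∈ S → i (ρ (β b) s) = ρ' (β b) (i s)) →
      ∀ s ∈ S₀, i (ρ g s) = ρ' g (i s)) ?_ ?_ ?_ g
  · intro a S₀ hS₀
    refine ⟨S₀ ∪ ρ (α a) '' S₀, {a}, ∅, hS₀.union (hS₀.image _), Set.finite_singleton _,
      Set.finite_empty, fun X ρ' i h1 _ s hs => ?_⟩
    exact h1 a rfl s (Or.inl hs) (Or.inr ⟨s, hs, rfl⟩)
  · intro a S₀ hS₀
    refine ⟨S₀ ∪ ρ (β a) '' S₀, ∅, {a}, hS₀.union (hS₀.image _),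
      Set.finite_empty, Set.finite_singleton _, fun X ρ' i _ h1 s hs => ?_⟩
    exact h1 a rfl s (Or.inl hs) (Or.inr ⟨s, hs, rfl⟩)
  · intro x y hx hy S₀ hS₀
    obtain ⟨S, FA, FB, h1, h2, h3, h4⟩ := hy S₀ hS₀
    obtain ⟨S', FA', FB', h1', h2', h3', h4'⟩ := hx (ρ y '' S₀) (hS₀.image _)
    refine ⟨S ∪ S', FA ∪ FA', FB ∪ FB', h1.union h1', h2.union h2', h3.union h3', ?_⟩
    intro X ρ' i hA hB s hs
    rw [map_mul, map_mul, Equiv.Perm.mul_apply, Equiv.Perm.mul_apply]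
    rw [h4' X ρ' i (fun a ha s hs hs' => hA a (Or.inr ha) s (Or.inr hs) (Or.inr hs'))
      (fun a ha s hs hs' => hB a (Or.inr ha) s (Or.inr hs) (Or.inr hs')) _ ⟨s, hs, rfl⟩,
      h4 X ρ' i (fun a ha s hs hs' => hA a (Or.inl ha) s (Or.inl hs) (Or.inl hs'))
      (fun a ha s hs hs' => hB a (Or.inl ha) s (Or.inl hs) (Or.inl hs')) s hs]

lemma aux_fg {C : Type} [Group C] (hC : MaxConditionOnSubgroups C) (K : Subgroup C) : K.FG := by
  have hw : WellFoundedGT (Subgroup C) := by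
    rw [wellFoundedGT_iff_monotone_chain_condition]
    intro f
    obtain ⟨n, hn⟩ := hC f
    exact ⟨n, fun m hm => (hn m hm).symm⟩
  obtain ⟨P, ⟨hP, hPK⟩, hmax⟩ := hw.wf.has_min {P : Subgroup C | P.FG ∧ P ≤ K}
    ⟨⊥, Subgroup.FG.bot, bot_le⟩
  suffices P = K from this ▸ hP
  refine le_antisymm hPK fun x hx => ?_
  by_contra hxP
  refine hmax (P ⊔ Subgroup.zpowers x) ⟨hP.sup ?_, sup_le hPK (by simpa using hx)⟩ ?_
  · exact ⟨{x}, by simp [Subgroup.zpowers_eq_closure]⟩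
  · refine lt_of_le_of_ne le_sup_left fun h => hxP ?_
    rw [h]
    exact Subgroup.mem_sup_right (Subgroup.mem_zpowers x)

lemma aux_char {C Q : Type} [Group C] [Group Q] [Finite Q] (hC : (⊤ : Subgroup C).FG) :
    ∃ L : Subgroup C, L.Characteristic ∧ L.FiniteIndex ∧ ∀ k : C →* Q, L ≤ k.ker := by
  have : Finite (C →* Q) := by
    obtain ⟨s, hs⟩ := hC
    refine Finite.of_injective (fun (k : C →* Q) (x : s) => k x) ?_
    intro k k' h
    refine MonoidHom.eq_of_eqOn_dense hs ?_
    intro x hx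
    exact congrFun h ⟨x, hx⟩
  let F : C →* ((C →* Q) → Q) := MonoidHom.pi fun k => k
  refine ⟨F.ker, ?_, inferInstance, ?_⟩
  · rw [Subgroup.characteristic_iff_le_comap]
    intro σ x hx
    have hx' : ∀ k : C →* Q, k x = 1 := fun k => congrFun (show F x = 1 from hx) k
    change F (σ x) = 1
    funext k
    exact hx' (k.comp σ.toMonoidHom)
  · intro k x hx
    exact congrFun (show F x = 1 from hx) k

lemma aux_conj {A C : Type} [Group A] [Group C] (j : C →* A) (hj : Function.Injective j)
    (hn : j.range.Normal) (L : Subgroup C) (hL : L.Characteristic) (a : A) (c : C) :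
    ∃ c', j c' = a * j c * a⁻¹ ∧ (c' ∈ L ↔ c ∈ L) := by
  let e : C ≃* j.range := MonoidHom.ofInjective hj
  let σ : C ≃* C := (e.trans (MulAut.conjNormal a)).trans e.symm
  refine ⟨σ c, ?_, ?_⟩
  · have h : ∀ y, j (e.symm y) = y := fun y => by
      have := e.apply_symm_apply y
      conv_rhs => rw [← this]
      rfl
    change j (e.symm _) = _
    rw [h]
    exact MulAut.conjNormal_apply a (e c)
  · have := Subgroup.characteristic_iff_comap_eq.1 hL σ
    conv_rhs => rw [← this]
    rfl

lemma aux_final {A B C G : Type} [Group A] [Group B] [Group C] [Group G]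
    (hA : SubgroupSeparable A) (hB : SubgroupSeparable B) (jA : C →* A) (jB : C →* B)
    (hjA : Function.Injective jA) (hjB : Function.Injective jB)
    (hnA : jA.range.Normal) (hnB : jB.range.Normal)
    (hC : MaxConditionOnSubgroups C)
    (α : A →* G) (β : B →* G) (hαβ : ∀ c, α (jA c) = β (jB c))
    (hinj : Function.Injective (α.comp jA))
    (hlift : ∀ (X : Type) (f : A →* Equiv.Perm X) (g : B →* Equiv.Perm X),
      (∀ c, f (jA c) = g (jB c)) →
      ∃ k : G →* Equiv.Perm X, (∀ a, k (α a) = f a) ∧ ∀ b, k (β b) = g b)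
    (hgen : ∀ p : G → Prop, (∀ a, p (α a)) → (∀ b, p (β b)) →
      (∀ x y, p x → p y → p (x * y)) → ∀ g, p g) :
    SubgroupSeparable G := by
  intro M hM g hg
  set γ : C →* G := α.comp jA with hγ
  have hconj : ∀ L : Subgroup C, L.Characteristic → ∀ g c,
      ∃ c', γ c' = g * γ c * g⁻¹ ∧ (c' ∈ L ↔ c ∈ L) := by
    intro L hL
    refine hgen _ ?_ ?_ ?_
    · intro a c
      obtain ⟨c', h1, h2⟩ := aux_conj jA hjA hnA L hL a c
      exact ⟨c', by simp [hγ, h1], h2⟩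
    · intro b c
      obtain ⟨c', h1, h2⟩ := aux_conj jB hjB hnB L hL b c
      exact ⟨c', by simp [hγ, h1, hαβ], h2⟩
    · intro x y hx hy c
      obtain ⟨c', h1, h2⟩ := hy c
      obtain ⟨c'', h3, h4⟩ := hx c'
      exact ⟨c'', by rw [h3, h1]; group, h4.trans h2⟩
  have hnorm : ∀ L : Subgroup C, L.Characteristic → (L.map γ).Normal := by
    intro L hL
    constructor
    rintro _ ⟨c, hc, rfl⟩ g
    obtain ⟨c', h1, h2⟩ := hconj L hL g c
    exact ⟨c', h2.2 hc, h1⟩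
  obtain ⟨L, hLc, hLf, hgL⟩ : ∃ L : Subgroup C, L.Characteristic ∧ L.FiniteIndex ∧
      g ∉ M ⊔ L.map γ := by
    by_cases h : g ∈ M ⊔ (⊤ : Subgroup C).map γ
    · have := hnorm ⊤ inferInstance
      rw [Subgroup.mem_sup_of_normal_right] at h
      obtain ⟨m, hm, _, ⟨c, -, rfl⟩, rfl⟩ := h
      have hc : jA c ∉ (M.comap γ).map jA := by
        rintro ⟨c', hc', h⟩
        rw [hjA h] at hc'
        exact hg (M.mul_mem hm hc')
      have hfg : ((M.comap γ).map jA).FG := by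
        classical
        obtain ⟨s, hs⟩ := aux_fg hC (M.comap γ)
        exact ⟨s.image jA, by rw [Finset.coe_image, ← MonoidHom.map_closure, hs]⟩
      obtain ⟨Q, _, _, f, -, hf⟩ := hA _ hfg _ hc
      obtain ⟨L, hLc, hLf, hLk⟩ := aux_char (Q := Q) (aux_fg hC ⊤)
      refine ⟨L, hLc, hLf, fun hmem => ?_⟩
      have := hnorm L hLc
      rw [Subgroup.mem_sup_of_normal_right] at hmem
      obtain ⟨m', hm', _, ⟨l, hl, rfl⟩, hml⟩ := hmem
      apply hf
      refine ⟨jA (c * l⁻¹), ⟨c * l⁻¹, ?_, rfl⟩, ?_⟩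
      · change γ (c * l⁻¹) ∈ M
        have : γ (c * l⁻¹) = m⁻¹ * m' := by
          rw [map_mul, map_inv, mul_inv_eq_iff_eq_mul, mul_assoc, hml]; simp
        rw [this]
        exact M.mul_mem (M.inv_mem hm) hm'
      · have h1 : f (jA l) = 1 := hLk (f.comp jA) hl
        simp [h1]
    · exact ⟨⊤, inferInstance, inferInstance, h⟩
  have hLfg := aux_fg hC L
  have hN := hnorm L hLc
  have hNA := aux_conj jA hjA hnA L hLc
  have hNB := aux_conj jB hjB hnB L hLc
  -- a finite `G`-set on which all `C`-stabilizers are `L`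
  obtain ⟨Z, _, ρZ, iZ, -, -, -, hZ⟩ := aux_main hA hB jA jB α β hαβ hlift L hLfg hNA hNB
    (MulAction.toPermHom G (G ⧸ L.map γ)) (by
      intro y c
      obtain ⟨x, rfl⟩ := QuotientGroup.mk_surjective y
      change ((γ c * x : G) : G ⧸ L.map γ) = (x : G ⧸ L.map γ) ↔ _
      rw [eq_comm, QuotientGroup.eq]
      obtain ⟨c', h1, h2⟩ := hconj L hLc x⁻¹ c
      rw [inv_inv] at h1
      rw [← mul_assoc, ← h1, ← h2]
      exact Subgroup.mem_map_iff_mem hinj) {((1 : G) : G ⧸ L.map γ)} (Set.finite_singleton _)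
    (Set.singleton_nonempty _) ∅ Set.finite_empty ∅ Set.finite_empty
  have z₀ : Z := iZ ((1 : G) : G ⧸ L.map γ)
  let N : Subgroup G := M ⊔ L.map γ
  let ρ : G →* Equiv.Perm ((G ⧸ N) × Z) :=
    { toFun := fun x => Equiv.prodCongr (MulAction.toPermHom G (G ⧸ N) x) (ρZ x)
      map_one' := by ext x <;> simp
      map_mul' := fun a b => by ext x <;> simp [mul_smul] }
  have hρd : ∀ x (y : G) z, ρ x ((y : G ⧸ N), z) = (((x * y : G) : G ⧸ N), ρZ x z) :=
    fun _ _ _ => rfl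
  have hρ : ∀ y c, ρ (α (jA c)) y = y ↔ c ∈ L := by
    rintro ⟨y, z⟩ c
    obtain ⟨x, rfl⟩ := QuotientGroup.mk_surjective y
    rw [hρd, Prod.mk.injEq, hZ]
    refine ⟨fun h => h.2, fun h => ⟨?_, h⟩⟩
    rw [eq_comm, QuotientGroup.eq, ← mul_assoc]
    refine Subgroup.mem_sup_right ?_
    have := hN.conj_mem (γ c) ⟨c, h, rfl⟩ x⁻¹
    rwa [inv_inv] at this
  let S₀ : Set ((G ⧸ N) × Z) := Set.range fun z => (((1 : G) : G ⧸ N), z)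
  have hS₀ : S₀.Finite := Set.finite_range _
  obtain ⟨F, hF⟩ := hM
  choose S FA FB hSf hFAf hFBf hW using fun x => aux_word α β hgen ρ x S₀ hS₀
  classical
  let E : Finset G := insert g F
  let SS : Set ((G ⧸ N) × Z) := (S₀ ∪ ρ g '' S₀) ∪ ⋃ x ∈ E, S x
  obtain ⟨X, _, ρ', i, hi, hiA, hiB, -⟩ := aux_main hA hB jA jB α β hαβ hlift L hLfg hNA hNB
    ρ hρ SS ((hS₀.union (hS₀.image _)).union (E.finite_toSet.biUnion fun x _ => hSf x))
    ⟨(((1 : G) : G ⧸ N), z₀), Or.inl (Or.inl ⟨z₀, rfl⟩)⟩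
    (⋃ x ∈ E, FA x) (E.finite_toSet.biUnion fun x _ => hFAf x)
    (⋃ x ∈ E, FB x) (E.finite_toSet.biUnion fun x _ => hFBf x)
  have key : ∀ x ∈ E, ∀ s ∈ S₀, i (ρ x s) = ρ' x (i s) := by
    intro x hx
    have hsub : S x ⊆ SS := fun y hy => Or.inr (Set.mem_biUnion hx hy)
    refine hW x X ρ' i ?_ ?_
    · intro a ha s hs hs'
      exact hiA a (Set.mem_biUnion hx ha) s (hsub hs) (hsub hs')
    · intro a ha s hs hs'
      exact hiB a (Set.mem_biUnion hx ha) s (hsub hs) (hsub hs')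
  let T : Set X := i '' S₀
  have hTf : T.Finite := hS₀.image _
  have hMT : ∀ m ∈ M, ρ' m '' T = T := by
    intro m hm
    rw [← hF] at hm
    induction hm using Subgroup.closure_induction with
    | mem x hx =>
      have hxM : x ∈ M := by rw [← hF]; exact Subgroup.subset_closure hx
      have hsub : ρ' x '' T ⊆ T := by
        rintro _ ⟨_, ⟨s, hs, rfl⟩, rfl⟩
        rw [← key x (Finset.mem_insert_of_mem hx) s hs]
        obtain ⟨z, rfl⟩ := hs
        refine ⟨_, ⟨ρZ x z, rfl⟩, ?_⟩
        simp only
        rw [hρd]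
        congr 2
        rw [QuotientGroup.eq]
        refine Subgroup.mem_sup_left ?_
        simpa using hxM
      exact Set.eq_of_subset_of_ncard_le hsub
        (Set.ncard_image_of_injective T (ρ' x).injective).ge hTf
    | one => simp
    | mul x y _ _ hx hy =>
      rw [map_mul, Equiv.Perm.coe_mul, Set.image_comp, hy, hx]
    | inv x _ hx =>
      conv_lhs => rw [← hx]
      rw [← Set.image_comp, ← Equiv.Perm.coe_mul, ← map_mul]
      simp
  refine ⟨ULift.{0} ρ'.range, inferInstance, inferInstance,
    MulEquiv.ulift.symm.toMonoidHom.comp ρ'.rangeRestrict, ?_, ?_⟩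
  · rw [MonoidHom.coe_comp]
    exact MulEquiv.ulift.symm.surjective.comp ρ'.rangeRestrict_surjective
  · rintro ⟨m, hm, h⟩
    have h' : ρ' m = ρ' g := congrArg Subtype.val (MulEquiv.ulift.symm.injective h)
    have h1 : ρ' g (i (((1 : G) : G ⧸ N), z₀)) ∈ T := by
      rw [← hMT m hm, ← h']
      exact ⟨_, ⟨_, ⟨z₀, rfl⟩, rfl⟩, rfl⟩
    rw [← key g (Finset.mem_insert_self _ _) _ ⟨z₀, rfl⟩] at h1
    obtain ⟨_, ⟨z, rfl⟩, hs⟩ := h1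
    have h2 := hi (Or.inl (Or.inl ⟨z, rfl⟩)) (Or.inl (Or.inr ⟨_, ⟨z₀, rfl⟩, rfl⟩)) hs
    rw [hρd, Prod.mk.injEq, QuotientGroup.eq] at h2
    apply hgL
    simpa using h2.1

/-- If `H` and `K` are normal subgroups of `A` and `B` respectively satisfying the maximum
condition for subgroups, and `A` and `B` are subgroup separable, then the generalized free
product `(A ∗ B; H = K, φ)` is subgroup separable. -/
theorem subgroupSeparable_amalgamatedProduct {A B : Type} [Group A] [Group B]
    (H : Subgroup A) (K : Subgroup B) (φ : H ≃* K)
    (hHnormal : H.Normal) (hKnormal : K.Normal)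
    (hHmax : MaxConditionOnSubgroups ↥H) (hKmax : MaxConditionOnSubgroups ↥K)
    (hA : SubgroupSeparable A) (hB : SubgroupSeparable B) :
    SubgroupSeparable (AmalgamatedProduct H K φ) := by

  have hinj : ∀ b, Function.Injective (amalgMaps H K φ b) := by
    intro b
    cases b
    · exact K.subtype_injective.comp φ.injective
    · exact H.subtype_injective
  refine aux_final (C := H) hA hB (amalgMaps H K φ true) (amalgMaps H K φ false)
    (hinj true) (hinj false) ?_ ?_ hHmax
    (Monoid.PushoutI.of (φ := amalgMaps H K φ) true)
    (Monoid.PushoutI.of (φ := amalgMaps H K φ) false) ?_ ?_ ?_ ?_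
  · have : (amalgMaps H K φ true).range = H := H.range_subtype
    rw [this]; exact hHnormal
  · have : (amalgMaps H K φ false).range = K := by
      ext x
      constructor
      · rintro ⟨c, rfl⟩
        exact (φ c).2
      · intro hx
        refine ⟨φ.symm ⟨x, hx⟩, ?_⟩
        change ((φ (φ.symm ⟨x, hx⟩) : K) : B) = x
        simp
    rw [this]; exact hKnormal
  · intro c
    rw [Monoid.PushoutI.of_apply_eq_base, Monoid.PushoutI.of_apply_eq_base]
  · rw [Monoid.PushoutI.of_comp_eq_base]
    exact Monoid.PushoutI.base_injective hinj
  · intro X f g hfg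
    let F : ∀ b, amalgFactor A B b →* Equiv.Perm X := fun b => match b with
      | true => f
      | false => g
    let k := Monoid.PushoutI.lift (φ := amalgMaps H K φ) F (f.comp (amalgMaps H K φ true)) (by
      intro b
      cases b
      · ext1 c
        exact (hfg c).symm
      · rfl)
    exact ⟨k, fun a => Monoid.PushoutI.lift_of (i := true) F _ _ a,
      fun b => Monoid.PushoutI.lift_of (i := false) F _ _ b⟩
  · intro p h1 h2 h3 g
    induction g using Monoid.PushoutI.induction_on with
    | of b x =>
      cases b
      · exact h2 x
      · exact h1 x
    | base h =>
      rw [← Monoid.PushoutI.of_apply_eq_base _ true]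
      exact h1 _
    | mul x y hx hy => exact h3 x y hx hy
end

section
/- Let G = (A * B; H = K, φ) be the generalized free product of groups A and B with subgroups H ≤ A and K ≤ B amalgamated according to an isomorphism φ: H → K. If A and B are subgroup separable groups and H and K are cyclic normal subgroups of A and B respectively, then G is subgroup separable. -/
namespace SepAux

theorem comap_fi {G P : Type} [Group G] [Group P] [Finite P] (f : G →* P) (U : Subgroup P) :
    (U.comap f).FiniteIndex := by
  have : f.ker ≤ U.comap f := fun x hx => by
    rw [MonoidHom.mem_ker] at hx
    simp [Subgroup.mem_comap, hx, U.one_mem]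
  exact Subgroup.finiteIndex_of_le this

theorem sep_iff {G : Type} [Group G] (L : Subgroup G) :
    FinitelySeparable L ↔ ∀ g : G, g ∉ L → ∃ U : Subgroup G, U.FiniteIndex ∧ L ≤ U ∧ g ∉ U := by
  constructor
  · intro h g hg
    obtain ⟨Q, _, _, f, -, hf⟩ := h g hg
    exact ⟨(L.map f).comap f, comap_fi f _, Subgroup.le_comap_map f L, hf⟩
  · intro h g hg
    obtain ⟨U, hU, hLU, hgU⟩ := h g hg
    refine ⟨G ⧸ U.normalCore, inferInstance, inferInstance, QuotientGroup.mk' _,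
      QuotientGroup.mk'_surjective _, ?_⟩
    rintro ⟨l, hl, hlg⟩
    have h1 : l⁻¹ * g ∈ U.normalCore := QuotientGroup.eq.1 hlg
    have h2 := U.normalCore_le h1
    apply hgU
    have := U.mul_mem (hLU hl) h2
    simpa using this

theorem sep_finite {G : Type} [Group G] (hG : SubgroupSeparable G) (L : Subgroup G) (hL : L.FG)
    (E : Set G) (hE : E.Finite) :
    ∃ U : Subgroup G, U.FiniteIndex ∧ L ≤ U ∧ ∀ e ∈ E, e ∈ U → e ∈ L := by
  induction E, hE using Set.Finite.induction_on with
  | empty => exact ⟨⊤, inferInstance, le_top, by simp⟩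
  | @insert a s _ _ ih =>
    obtain ⟨U, hU, hLU, h⟩ := ih
    by_cases ha : a ∈ L
    · refine ⟨U, hU, hLU, ?_⟩
      rintro e (rfl | he)
      · exact fun _ => ha
      · exact h e he
    · obtain ⟨V, hV, hLV, haV⟩ := (sep_iff L).1 (hG L hL) a ha
      refine ⟨U ⊓ V, inferInstance, le_inf hLU hLV, ?_⟩
      rintro e (rfl | he) heU
      · exact absurd heU.2 haV
      · exact h e he heU.1

theorem sigma_eq {A Ω : Type} [Group A] (U : Ω → Subgroup A) (w w' : Ω) (a a' : A) :
    ((⟨w, (a : A ⧸ U w)⟩ : Σ w, A ⧸ U w) = ⟨w', (a' : A ⧸ U w')⟩) ↔ w = w' ∧ a⁻¹ * a' ∈ U w := by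
  constructor
  · intro h
    have h1 : w = w' := congrArg Sigma.fst h
    subst h1
    simp only [Sigma.mk.injEq, heq_eq_eq, true_and] at h
    exact ⟨rfl, QuotientGroup.eq.1 h⟩
  · rintro ⟨rfl, h⟩
    congr 1
    exact QuotientGroup.eq.2 h

/-- finite models of actions -/
theorem finite_model {A X : Type} [Group A] [MulAction A X] (hA : SubgroupSeparable A)
    (H : Subgroup A) (hH : H.Normal) (hHfg : H.FG) (htriv : ∀ h ∈ H, ∀ x : X, h • x = x)
    (F : Set X) (hF : F.Finite) (hne : F.Nonempty) (S : Set A) (hS : S.Finite) :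
    ∃ (Y : Type) (_ : Finite Y) (ρ : A →* Equiv.Perm Y) (ι : X → Y), Set.InjOn ι F ∧
      (∀ h ∈ H, ρ h = 1) ∧ ∀ s ∈ S, ∀ x ∈ F, s • x ∈ F → ρ s (ι x) = ι (s • x) := by
  classical
  let q : X → MulAction.orbitRel.Quotient A X := fun x => Quotient.mk'' x
  have hex : ∀ x : X, ∃ a : A, a • (q x).out = x := by
    intro x
    have : MulAction.orbitRel A X x (q x).out := by
      apply Quotient.exact
      simp [q]
    exact this
  choose a ha using hex
  let D : Set A := (fun t : X × X × A => (a t.1)⁻¹ * t.2.2 * a t.2.1) '' (F ×ˢ F ×ˢ S)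
  have hD : D.Finite := (hF.prod (hF.prod hS)).image _
  let E : Set A := (fun t : X × X => (a t.1)⁻¹ * a t.2) '' (F ×ˢ F)
  have hE : E.Finite := (hF.prod hF).image _
  have hU : ∀ w : MulAction.orbitRel.Quotient A X, ∃ U : Subgroup A, U.FiniteIndex ∧ H ≤ U ∧
      (∀ d ∈ D, d • w.out = w.out → d ∈ U) ∧ (∀ e ∈ E, e ∈ U → e • w.out = w.out) := by
    intro w
    let L : Subgroup A := Subgroup.closure (D ∩ {d | d • w.out = w.out}) ⊔ H
    have hL : L.FG := by
      apply Subgroup.FG.sup _ hHfg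
      rw [Subgroup.fg_iff]
      exact ⟨_, rfl, hD.inter_of_left _⟩
    have hLs : L ≤ MulAction.stabilizer A w.out := by
      apply sup_le
      · rw [Subgroup.closure_le]
        rintro d ⟨-, hd⟩
        exact hd
      · intro h hh
        exact htriv h hh _
    obtain ⟨U, hUf, hLU, hUE⟩ := sep_finite hA L hL E hE
    refine ⟨U, hUf, le_sup_right.trans hLU, ?_, ?_⟩
    · intro d hd hdw
      exact hLU ((le_sup_left : _ ≤ L) (Subgroup.subset_closure ⟨hd, hdw⟩))
    · intro e he heU
      exact hLs (hUE e he heU)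
  choose U hUf hHU hUD hUE using hU
  let Ω := q '' F
  have : Finite Ω := (hF.image q).to_subtype
  let Y : Type := Σ w : Ω, A ⧸ U w.1
  have : ∀ w : Ω, Finite (A ⧸ U w.1) := fun w => by
    have := hUf w.1
    infer_instance
  let ι0 : F → Y := fun x => ⟨⟨q x, x, x.2, rfl⟩, (a x : A ⧸ U (q x))⟩
  obtain ⟨x0, hx0⟩ := hne
  let ι : X → Y := fun x => if h : x ∈ F then ι0 ⟨x, h⟩ else ι0 ⟨x0, hx0⟩
  have hι : ∀ x (h : x ∈ F), ι x = ι0 ⟨x, h⟩ := fun x h => by simp [ι, h]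
  refine ⟨Y, inferInstance, MulAction.toPermHom A Y, ι, ?_, ?_, ?_⟩
  · intro x hx y hy hxy
    rw [hι x hx, hι y hy] at hxy
    obtain ⟨h1, h2⟩ := (sigma_eq (fun w : Ω => U w.1) _ _ _ _).1 hxy
    have h1' : q x = q y := congrArg Subtype.val h1
    have h3 := hUE (q x) _ ⟨(x, y), ⟨hx, hy⟩, rfl⟩ h2
    have h4 : a y • (q x).out = a x • (q x).out := by
      have h5 : ((a x)⁻¹ * a y) • (q x).out = (q x).out := h3
      rw [mul_smul, inv_smul_eq_iff] at h5
      exact h5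
    rw [ha x, h1', ha y] at h4
    exact h4.symm
  · intro h hh
    ext ⟨w, c⟩ : 1
    induction c using QuotientGroup.induction_on with
    | H c =>
      change (⟨w, ((h * c : A) : A ⧸ U w.1)⟩ : Y) = ⟨w, (c : A ⧸ U w.1)⟩
      rw [sigma_eq (fun w : Ω => U w.1)]
      refine ⟨rfl, hHU _ ?_⟩
      have := hH.conj_mem _ (H.inv_mem hh) c⁻¹
      simpa [mul_assoc] using this
  · intro s hs x hx hsx
    rw [hι x hx, hι _ hsx]
    change (⟨⟨q x, x, hx, rfl⟩, ((s * a x : A) : A ⧸ U (q x))⟩ : Y) =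
      ⟨⟨q (s • x), s • x, hsx, rfl⟩, (a (s • x) : A ⧸ U (q (s • x)))⟩
    symm
    rw [sigma_eq (fun w : Ω => U w.1)]
    have hq : q (s • x) = q x := by
      apply Quotient.sound
      exact ⟨s, rfl⟩
    refine ⟨Subtype.ext hq, ?_⟩
    rw [← mul_assoc]
    refine hUD _ _ ⟨(s • x, x, s), ⟨hsx, hx, hs⟩, rfl⟩ ?_
    simp only [mul_smul, inv_smul_eq_iff]
    rw [ha (s • x), hq, ha x]

theorem words {G X : Type} [Group G] [MulAction G X] (C : Set G) (g : G)
    (hg : g ∈ Subgroup.closure C) : ∀ x : X, ∃ (F : Set X) (S : Set G), F.Finite ∧ S.Finite ∧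
      ∀ (Y : Type) (σ : G →* Equiv.Perm Y) (ι : X → Y),
        (∀ s ∈ S, s ∈ C → ∀ y ∈ F, s • y ∈ F → σ s (ι y) = ι (s • y)) → σ g (ι x) = ι (g • x) := by
  induction hg using Subgroup.closure_induction with
  | mem c hc =>
    intro x
    refine ⟨{x, c • x}, {c}, by simp, by simp, ?_⟩
    intro Y σ ι h
    exact h c rfl hc x (by simp) (by simp)
  | one =>
    intro x
    exact ⟨∅, ∅, by simp, by simp, fun Y σ ι _ => by simp⟩
  | mul g h _ _ ihg ihh =>
    intro x
    obtain ⟨F1, S1, hF1, hS1, h1⟩ := ihh x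
    obtain ⟨F2, S2, hF2, hS2, h2⟩ := ihg (h • x)
    refine ⟨F1 ∪ F2, S1 ∪ S2, hF1.union hF2, hS1.union hS2, ?_⟩
    intro Y σ ι hc
    rw [map_mul, Equiv.Perm.mul_apply, h1 Y σ ι, h2 Y σ ι, mul_smul]
    · exact fun s hs hsC y hy hy' => hc s (Or.inr hs) hsC y (Or.inr hy) (Or.inr hy')
    · exact fun s hs hsC y hy hy' => hc s (Or.inl hs) hsC y (Or.inl hy) (Or.inl hy')
  | inv g _ ih =>
    intro x
    obtain ⟨F, S, hF, hS, h⟩ := ih (g⁻¹ • x)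
    refine ⟨F, S, hF, hS, fun Y σ ι hc => ?_⟩
    have := h Y σ ι hc
    rw [smul_inv_smul] at this
    rw [map_inv, Equiv.Perm.inv_eq_iff_eq, this]

theorem exists_perm {F Z : Type} [Finite Z] (f1 f2 : F → Z) (h1 : Function.Injective f1)
    (h2 : Function.Injective f2) : ∃ e : Equiv.Perm Z, ∀ x, e (f1 x) = f2 x := by
  classical
  let e0 : {z // z ∈ Set.range f1} ≃ {z // z ∈ Set.range f2} :=
    (Equiv.ofInjective f1 h1).symm.trans (Equiv.ofInjective f2 h2)
  refine ⟨e0.extendSubtype, fun x => ?_⟩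
  rw [Equiv.extendSubtype_apply_of_mem e0 (f1 x) ⟨x, rfl⟩]
  have : (⟨f1 x, ⟨x, rfl⟩⟩ : {z // z ∈ Set.range f1}) = Equiv.ofInjective f1 h1 x := rfl
  rw [this]
  simp [e0]

/-- glue two finite models -/
theorem glue {A B X YA YB : Type} [Group A] [Group B] [Finite YA] [Finite YB]
    (ρA : A →* Equiv.Perm YA) (ρB : B →* Equiv.Perm YB) (F : Set X) (ιA : X → YA) (ιB : X → YB)
    (hA : Set.InjOn ιA F) (hB : Set.InjOn ιB F) :
    ∃ (Y : Type) (_ : Finite Y) (rA : A →* Equiv.Perm Y) (rB : B →* Equiv.Perm Y) (ι : X → Y),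
      Set.InjOn ι F ∧ (∀ a, ρA a = 1 → rA a = 1) ∧ (∀ b, ρB b = 1 → rB b = 1) ∧
      (∀ a, ∀ x ∈ F, ∀ y ∈ F, ρA a (ιA x) = ιA y → rA a (ι x) = ι y) ∧
      (∀ b, ∀ x ∈ F, ∀ y ∈ F, ρB b (ιB x) = ιB y → rB b (ι x) = ι y) := by
  obtain ⟨e, he⟩ := exists_perm (Z := YA ⊕ YB) (fun x : F => Sum.inl (ιA x))
    (fun x : F => Sum.inr (ιB x))
    (fun x y h => Subtype.ext (hA x.2 y.2 (Sum.inl_injective h)))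
    (fun x y h => Subtype.ext (hB x.2 y.2 (Sum.inr_injective h)))
  refine ⟨YA ⊕ YB, inferInstance,
    ((Equiv.Perm.sumCongrHom YA YB).comp (MonoidHom.inl _ _)).comp ρA,
    ((MulAut.conj e⁻¹).toMonoidHom.comp
      ((Equiv.Perm.sumCongrHom YA YB).comp (MonoidHom.inr _ _))).comp ρB,
    fun x => Sum.inl (ιA x), ?_, ?_, ?_, ?_, ?_⟩
  · intro x hx y hy h
    exact hA hx hy (Sum.inl_injective h)
  · intro a ha
    simp only [MonoidHom.comp_apply, ha, map_one]
  · intro b hb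
    simp only [MonoidHom.comp_apply, hb, map_one]
  · intro a x hx y hy h
    simp [h]
  · intro b x hx y hy h
    have h1 : e (Sum.inl (ιA x)) = Sum.inr (ιB x) := he ⟨x, hx⟩
    have h2 : e (Sum.inl (ιA y)) = Sum.inr (ιB y) := he ⟨y, hy⟩
    simp [h1, h, Equiv.symm_apply_eq, h2]

end SepAux

namespace SepAux

theorem finite_amalg {P Q : Type} [Group P] [Group Q] [Finite P] [Finite Q] (p : P) (q : Q)
    (hpq : ∀ k : ℤ, p ^ k = 1 ↔ q ^ k = 1) :
    ∃ (Z : Type) (_ : Finite Z) (r : P →* Equiv.Perm Z) (r' : Q →* Equiv.Perm Z),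
      Function.Injective r ∧ r p = r' q := by
  let R := P × Q
  let x : R := (p, 1)
  let y : R := (1, q)
  have ho : orderOf x = orderOf y := by
    rw [orderOf_eq_orderOf_iff]
    intro n
    have := hpq n
    rw [zpow_natCast, zpow_natCast] at this
    have hx : x ^ n = (p ^ n, 1) := Prod.ext rfl (one_pow n)
    have hy : y ^ n = (1, q ^ n) := Prod.ext (one_pow n) rfl
    rw [hx, hy]
    change (p ^ n, (1 : Q)) = (1, 1) ↔ ((1 : P), q ^ n) = (1, 1)
    rw [Prod.mk.injEq, Prod.mk.injEq]
    simpa using this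
  let c := zpowersEquivZPowers ho
  obtain ⟨T, hT, -⟩ := (Subgroup.zpowers x).exists_isComplement_right 1
  obtain ⟨T', hT', -⟩ := (Subgroup.zpowers y).exists_isComplement_right 1
  have hcard : Nat.card T = Nat.card T' := by
    have h1 : Nat.card R = Nat.card (Subgroup.zpowers x) * Nat.card T :=
      (Nat.card_congr hT.equiv).trans (Nat.card_prod _ _)
    have h2 : Nat.card R = Nat.card (Subgroup.zpowers y) * Nat.card T' :=
      (Nat.card_congr hT'.equiv).trans (Nat.card_prod _ _)
    have h3 : Nat.card (Subgroup.zpowers x) = Nat.card (Subgroup.zpowers y) := Nat.card_congr c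
    have h4 : 0 < Nat.card (Subgroup.zpowers x) := Nat.card_pos
    have h5 : Nat.card (Subgroup.zpowers x) * Nat.card T
      = Nat.card (Subgroup.zpowers x) * Nat.card T' := by
      refine h1.symm.trans (h2.trans ?_)
      rw [h3]
    exact Nat.eq_of_mul_eq_mul_left h4 h5
  let k : T ≃ T' := (Finite.card_eq.1 hcard).some
  let e : R ≃ R := hT.equiv.trans ((Equiv.prodCongr c k).trans hT'.equiv.symm)
  have hc : ∀ i : Subgroup.zpowers x, c (⟨x, Subgroup.mem_zpowers x⟩ * i) =
      ⟨y, Subgroup.mem_zpowers y⟩ * c i := by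
    rintro ⟨i, hi⟩
    obtain ⟨n, rfl⟩ := (isOfFinOrder_of_finite x).mem_powers_iff_mem_zpowers.2 hi
    have h1 := zpowersEquivZPowers_apply ho n
    have h2 := zpowersEquivZPowers_apply ho (n + 1)
    have h3 : (⟨x, Subgroup.mem_zpowers x⟩ * ⟨x ^ n, hi⟩ : Subgroup.zpowers x) =
      ⟨x ^ (n + 1), n + 1, by simp [← zpow_natCast]⟩ := Subtype.ext (pow_succ' x n).symm
    change c (⟨x, Subgroup.mem_zpowers x⟩ * ⟨x ^ n, hi⟩) = _ * c ⟨x ^ n, hi⟩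
    rw [h3]
    refine (h2.trans ?_).trans (congrArg (_ * ·) h1.symm)
    exact Subtype.ext (pow_succ' y n)
  have he : ∀ z : R, e (x * z) = y * e z := by
    intro z
    have h1 := hT.equiv_mul_left ⟨x, Subgroup.mem_zpowers x⟩ z
    simp only at h1
    have h2 : e (x * z) = hT'.equiv.symm (c (hT.equiv (x * z)).1, k (hT.equiv (x * z)).2) := rfl
    rw [h2, h1]
    rw [Equiv.symm_apply_eq]
    have h3 := hT'.equiv_mul_left ⟨y, Subgroup.mem_zpowers y⟩ (e z)
    simp only at h3
    rw [h3]
    have h4 : hT'.equiv (e z) = (c (hT.equiv z).1, k (hT.equiv z).2) := by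
      simp only [e, Equiv.trans_apply, Equiv.apply_symm_apply]
      rfl
    rw [h4]
    exact Prod.ext (hc _) rfl
  refine ⟨R, inferInstance, (MulAction.toPermHom R R).comp (MonoidHom.inl P Q),
    ((MulAut.conj (e : Equiv.Perm R)⁻¹).toMonoidHom.comp (MulAction.toPermHom R R)).comp
      (MonoidHom.inr P Q), ?_, ?_⟩
  · intro a b hab
    have := congrArg (fun f : Equiv.Perm R => f 1) hab
    simpa [R] using this
  · ext z : 1
    have h1 : ((MulAction.toPermHom R R).comp (MonoidHom.inl P Q)) p z = x * z := rfl
    have h2 : (((MulAut.conj (e : Equiv.Perm R)⁻¹).toMonoidHom.comp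
      (MulAction.toPermHom R R)).comp (MonoidHom.inr P Q)) q z = e.symm (y * e z) := rfl
    rw [h1, h2, Equiv.eq_symm_apply, he]

theorem zpowers_pow_normal {G : Type} [Group G] (z : G) (hz : (Subgroup.zpowers z).Normal)
    (m : ℤ) : (Subgroup.zpowers (z ^ m)).Normal := by
  constructor
  rintro n ⟨j, rfl⟩ g
  obtain ⟨r, hr⟩ := hz.conj_mem z (Subgroup.mem_zpowers z) g
  refine ⟨r * j, ?_⟩
  have hr' : z ^ r = g * z * g⁻¹ := hr
  simp only
  rw [← zpow_mul, ← zpow_mul, ← conj_zpow, ← hr', ← zpow_mul]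
  congr 1
  ring

theorem fg_zpowers {G : Type} [Group G] (z : G) : (Subgroup.zpowers z).FG := by
  rw [Subgroup.fg_iff]
  exact ⟨{z}, (Subgroup.zpowers_eq_closure z).symm, Set.finite_singleton z⟩

theorem sep_power {A : Type} [Group A] (hA : SubgroupSeparable A) (z : A)
    (hz : (Subgroup.zpowers z).Normal) (m : ℤ) (hm : m ≠ 0) :
    ∃ M : Subgroup A, M.Normal ∧ M.FiniteIndex ∧
      ∀ k : ℤ, z ^ k ∈ M ↔ z ^ k ∈ Subgroup.zpowers (z ^ m) := by
  have := zpowers_pow_normal z hz m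
  obtain ⟨U, hU, hTU, hE⟩ := sep_finite hA (Subgroup.zpowers (z ^ m)) (fg_zpowers _)
    ((fun k : ℤ => z ^ k) '' (Set.Ico 0 |m|)) ((Set.finite_Ico _ _).image _)
  refine ⟨U.normalCore, inferInstance, inferInstance, fun k => ⟨fun h => ?_, fun h => ?_⟩⟩
  · have hk : z ^ k = z ^ (k % m) * (z ^ m) ^ (k / m) := by
      rw [← zpow_mul, ← zpow_add, Int.emod_add_mul_ediv]
    have h2 : (z ^ m) ^ (k / m) ∈ Subgroup.zpowers (z ^ m) := ⟨_, rfl⟩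
    have h1 := U.normalCore_le h
    rw [hk] at h1 ⊢
    have h3 := (U.mul_mem_cancel_right (hTU h2)).1 h1
    exact Subgroup.mul_mem _
      (hE _ ⟨k % m, ⟨Int.emod_nonneg _ hm, Int.emod_lt_abs _ hm⟩, rfl⟩ h3) h2
  · exact Subgroup.normal_le_normalCore.2 hTU h

theorem fg_inf_fi {G : Type} [Group G] (L N : Subgroup G) (hL : L.FG) [N.FiniteIndex] :
    (L ⊓ N).FG := by
  have := (Group.fg_iff_subgroup_fg L).2 hL
  have h := Subgroup.fg_of_index_ne_zero (N.subgroupOf L)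
  rw [Group.fg_iff_subgroup_fg] at h
  rw [Subgroup.fg_iff_submonoid_fg] at h ⊢
  have h2 := h.map L.subtype
  rw [inf_comm, ← Subgroup.subgroupOf_map_subtype]
  exact h2

end SepAux

namespace SepAux

/-- separation of finitely generated subgroups containing the amalgamated subgroup -/
theorem sep_of_ge {A B G : Type} [Group A] [Group B] [Group G] (iA : A →* G) (iB : B →* G)
    (hgen : Subgroup.closure (Set.range iA ∪ Set.range iB) = ⊤) (h0 : A) (k0 : B)
    (hz : iA h0 = iB k0)
    (hn : (Subgroup.zpowers h0).Normal) (kn : (Subgroup.zpowers k0).Normal)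
    (zn : (Subgroup.zpowers (iA h0)).Normal)
    (huniv : ∀ (P : Type) [Group P] (f : A →* P) (f' : B →* P), f h0 = f' k0 →
      ∃ σ : G →* P, (∀ a, σ (iA a) = f a) ∧ (∀ b, σ (iB b) = f' b))
    (hA : SubgroupSeparable A) (hB : SubgroupSeparable B)
    (L : Subgroup G) (hL : L.FG) (hzL : iA h0 ∈ L) (g : G) (hg : g ∉ L) :
    ∃ U : Subgroup G, U.FiniteIndex ∧ L ≤ U ∧ g ∉ U := by
  classical
  obtain ⟨T, hTL, hT⟩ := (Subgroup.fg_iff L).1 hL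
  let X := G ⧸ L
  let x0 : X := ((1 : G) : G ⧸ L)
  have hw := fun t : G => words (X := X) (Set.range iA ∪ Set.range iB) t
    (by rw [hgen]; trivial) x0
  choose Fw Sw hFw hSw hw using hw
  let T' : Set G := insert g T
  have hT' : T'.Finite := hT.insert g
  let F : Set X := (⋃ t ∈ T', Fw t) ∪ {x0, g • x0}
  have hF : F.Finite := (hT'.biUnion fun t _ => hFw t).union (by simp)
  let S : Set G := ⋃ t ∈ T', Sw t
  have hS : S.Finite := hT'.biUnion fun t _ => hSw t
  have hne : F.Nonempty := ⟨x0, Or.inr (by simp)⟩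
  have htriv : ∀ n ∈ Subgroup.zpowers (iA h0), ∀ x : X, n • x = x := by
    intro n hn x
    induction x using QuotientGroup.induction_on with
    | H c =>
      change ((n * c : G) : G ⧸ L) = (c : G ⧸ L)
      rw [QuotientGroup.eq]
      have h1 := zn.conj_mem _ (Subgroup.inv_mem _ hn) c⁻¹
      have h2 : Subgroup.zpowers (iA h0) ≤ L := by
        rw [Subgroup.zpowers_le]
        exact hzL
      have := h2 h1
      simpa [mul_assoc] using this
  obtain ⟨YA, _, ρA, ιA, hιA, hρA, hcA⟩ : ∃ (Y : Type) (_ : Finite Y) (ρ : A →* Equiv.Perm Y)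
      (ι : X → Y), Set.InjOn ι F ∧ (∀ h ∈ Subgroup.zpowers h0, ρ h = 1) ∧
      ∀ s ∈ Function.invFun iA '' S, ∀ x ∈ F, iA s • x ∈ F → ρ s (ι x) = ι (iA s • x) := by
    letI : MulAction A X := MulAction.compHom X iA
    refine finite_model hA _ hn (fg_zpowers h0) ?_ F hF hne _ (hS.image _)
    rintro h ⟨j, rfl⟩ x
    exact htriv _ ⟨j, (map_zpow iA h0 j).symm⟩ x
  obtain ⟨YB, _, ρB, ιB, hιB, hρB, hcB⟩ : ∃ (Y : Type) (_ : Finite Y) (ρ : B →* Equiv.Perm Y)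
      (ι : X → Y), Set.InjOn ι F ∧ (∀ h ∈ Subgroup.zpowers k0, ρ h = 1) ∧
      ∀ s ∈ Function.invFun iB '' S, ∀ x ∈ F, iB s • x ∈ F → ρ s (ι x) = ι (iB s • x) := by
    letI : MulAction B X := MulAction.compHom X iB
    refine finite_model hB _ kn (fg_zpowers k0) ?_ F hF hne _ (hS.image _)
    rintro h ⟨j, rfl⟩ x
    exact htriv _ ⟨j, by rw [hz]; exact (map_zpow iB k0 j).symm⟩ x
  obtain ⟨Y, _, rA, rB, ι, hι, h1A, h1B, h2A, h2B⟩ := glue ρA ρB F ιA ιB hιA hιB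
  obtain ⟨σ, hσA, hσB⟩ := huniv (Equiv.Perm Y) rA rB (by
    rw [h1A _ (hρA _ (Subgroup.mem_zpowers _)), h1B _ (hρB _ (Subgroup.mem_zpowers _))])
  have hcompat : ∀ s ∈ S, s ∈ Set.range iA ∪ Set.range iB → ∀ y ∈ F, s • y ∈ F →
      σ s (ι y) = ι (s • y) := by
    rintro s hs (hsA | hsB) y hy hsy
    · have he : iA (Function.invFun iA s) = s := Function.invFun_eq hsA
      have h3 := hcA _ ⟨s, hs, rfl⟩ y hy (by rw [he]; exact hsy)
      rw [he] at h3
      have h4 := h2A _ y hy _ hsy h3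
      rw [← hσA, he] at h4
      exact h4
    · have he : iB (Function.invFun iB s) = s := Function.invFun_eq hsB
      have h3 := hcB _ ⟨s, hs, rfl⟩ y hy (by rw [he]; exact hsy)
      rw [he] at h3
      have h4 := h2B _ y hy _ hsy h3
      rw [← hσB, he] at h4
      exact h4
  have hmove : ∀ t ∈ T', σ t (ι x0) = ι (t • x0) := by
    intro t ht
    apply hw t Y σ ι
    intro s hs hsC y hy hsy
    exact hcompat s (Set.mem_biUnion ht hs) hsC y (Or.inl (Set.mem_biUnion ht hy))
      (Or.inl (Set.mem_biUnion ht hsy))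
  refine ⟨(MulAction.stabilizer (Equiv.Perm Y) (ι x0)).comap σ, comap_fi _ _, ?_, ?_⟩
  · rw [← hTL, Subgroup.closure_le]
    intro t ht
    have h5 := hmove t (Or.inr ht)
    have h6 : t • x0 = x0 := by
      change ((t * 1 : G) : G ⧸ L) = ((1 : G) : G ⧸ L)
      rw [QuotientGroup.eq]
      have : t ∈ L := by
        rw [← hTL]
        exact Subgroup.subset_closure ht
      simpa using this
    rw [h6] at h5
    exact h5
  · intro hgU
    have h5 : σ g (ι x0) = ι x0 := hgU
    rw [hmove g (Or.inl rfl)] at h5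
    have h6 := hι (Or.inr (by simp)) (Or.inr (by simp)) h5
    change ((g * 1 : G) : G ⧸ L) = ((1 : G) : G ⧸ L) at h6
    rw [QuotientGroup.eq] at h6
    apply hg
    simpa using h6

theorem exists_psi {A B G : Type} [Group A] [Group B] [Group G] (iA : A →* G) (iB : B →* G)
    (h0 : A) (k0 : B)
    (hord : ∀ k : ℤ, h0 ^ k = 1 ↔ k0 ^ k = 1)
    (hn : (Subgroup.zpowers h0).Normal) (kn : (Subgroup.zpowers k0).Normal)
    (huniv : ∀ (P : Type) [Group P] (f : A →* P) (f' : B →* P), f h0 = f' k0 →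
      ∃ σ : G →* P, (∀ a, σ (iA a) = f a) ∧ (∀ b, σ (iB b) = f' b))
    (hA : SubgroupSeparable A) (hB : SubgroupSeparable B) (m : ℤ) (hm : m ≠ 0) :
    ∃ (P : Type) (_ : Group P) (_ : Finite P) (ψ : G →* P),
      ∀ k : ℤ, ψ (iA h0 ^ k) = 1 → iA h0 ^ k ∈ Subgroup.zpowers (iA h0 ^ m) := by
  obtain ⟨M, _, _, hM⟩ := sep_power hA h0 hn m hm
  obtain ⟨N, _, _, hN⟩ := sep_power hB k0 kn m hm
  have key : ∀ k : ℤ, h0 ^ k ∈ Subgroup.zpowers (h0 ^ m) ↔ k0 ^ k ∈ Subgroup.zpowers (k0 ^ m) := by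
    intro k
    simp only [Subgroup.mem_zpowers_iff]
    refine exists_congr fun j => ?_
    have := hord (m * j - k)
    rwa [zpow_sub, zpow_sub, mul_inv_eq_one, mul_inv_eq_one, zpow_mul, zpow_mul] at this
  obtain ⟨Z, _, r, r', hr, hrr⟩ := finite_amalg (h0 : A ⧸ M) (k0 : B ⧸ N) (by
    intro k
    rw [← QuotientGroup.mk_zpow, ← QuotientGroup.mk_zpow, QuotientGroup.eq_one_iff,
      QuotientGroup.eq_one_iff, hM, hN, key])
  obtain ⟨ψ, hψ, -⟩ := huniv (Equiv.Perm Z) (r.comp (QuotientGroup.mk' M))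
    (r'.comp (QuotientGroup.mk' N)) hrr
  refine ⟨Equiv.Perm Z, inferInstance, inferInstance, ψ, fun k hk => ?_⟩
  rw [← map_zpow, hψ] at hk
  have h1 : ((h0 ^ k : A) : A ⧸ M) = 1 := hr (by rw [map_one]; exact hk)
  rw [QuotientGroup.eq_one_iff, hM] at h1
  obtain ⟨j, hj⟩ := h1
  refine ⟨j, ?_⟩
  have := congrArg iA hj
  simpa [map_zpow] using this

theorem choose_m {G : Type} [Group G] (L : Subgroup G) (z : G)
    (zn : (Subgroup.zpowers z).Normal) (k : ℤ)
    (hk : z ^ k ∉ L) : ∃ m : ℤ, m ≠ 0 ∧ z ^ k ∉ L ⊔ Subgroup.zpowers (z ^ m) := by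
  by_cases h : ∃ m : ℤ, m ≠ 0 ∧ z ^ m ∈ L
  · obtain ⟨m, hm, hmL⟩ := h
    refine ⟨m, hm, ?_⟩
    rwa [sup_eq_left.2 (Subgroup.zpowers_le.2 hmL)]
  · push Not at h
    have hk0 : k ≠ 0 := by
      rintro rfl
      exact hk (by simp [L.one_mem])
    refine ⟨|k| + 1, by positivity, fun hmem => ?_⟩
    have := zpowers_pow_normal z zn (|k| + 1)
    rw [Subgroup.mem_sup_of_normal_right] at hmem
    obtain ⟨l, hl, y, ⟨j, rfl⟩, hlj⟩ := hmem
    have hlj' : l * (z ^ (|k| + 1)) ^ j = z ^ k := hlj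
    rw [← zpow_mul, ← eq_mul_inv_iff_mul_eq, ← zpow_sub] at hlj'
    have h2 : k - (|k| + 1) * j = 0 := by
      by_contra hne
      exact h _ hne (hlj' ▸ hl)
    have h3 : (|k| + 1) ∣ k := ⟨j, by linarith⟩
    have h4 := Int.le_of_dvd (abs_pos.2 hk0) ((dvd_abs _ _).2 h3)
    linarith

theorem main {A B G : Type} [Group A] [Group B] [Group G] (iA : A →* G) (iB : B →* G)
    (hgen : Subgroup.closure (Set.range iA ∪ Set.range iB) = ⊤) (h0 : A) (k0 : B)
    (hz : iA h0 = iB k0) (hord : ∀ k : ℤ, h0 ^ k = 1 ↔ k0 ^ k = 1)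
    (hn : (Subgroup.zpowers h0).Normal) (kn : (Subgroup.zpowers k0).Normal)
    (huniv : ∀ (P : Type) [Group P] (f : A →* P) (f' : B →* P), f h0 = f' k0 →
      ∃ σ : G →* P, (∀ a, σ (iA a) = f a) ∧ (∀ b, σ (iB b) = f' b))
    (hA : SubgroupSeparable A) (hB : SubgroupSeparable B) : SubgroupSeparable G := by
  have zn : (Subgroup.zpowers (iA h0)).Normal := by
    rw [← Subgroup.normalizer_eq_top_iff, eq_top_iff, ← hgen, Subgroup.closure_le]
    have gen : ∀ (C : Type) [Group C] (i : C →* G) (c0 : C), i c0 = iA h0 →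
        (Subgroup.zpowers c0).Normal → Set.range i ⊆
          (Subgroup.normalizer (Subgroup.zpowers (iA h0) : Set G) : Set G) := by
      rintro C _ i c0 hi hc _ ⟨c, rfl⟩
      have h1 : ∀ c : C, ∀ x ∈ Subgroup.zpowers (iA h0), i c * x * (i c)⁻¹ ∈
          Subgroup.zpowers (iA h0) := by
        rintro c _ ⟨j, rfl⟩
        obtain ⟨l, hl⟩ := hc.conj_mem (c0 ^ j) ⟨j, rfl⟩ c
        refine ⟨l, ?_⟩
        have := congrArg i hl
        simpa [hi] using this
      rw [SetLike.mem_coe, Subgroup.mem_normalizer_iff]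
      intro x
      refine ⟨h1 c x, fun h => ?_⟩
      have := h1 c⁻¹ _ h
      simpa [mul_assoc] using this
    exact Set.union_subset (gen A iA h0 rfl hn) (gen B iB k0 hz.symm kn)
  have sep := sep_of_ge iA iB hgen h0 k0 hz hn kn zn huniv hA hB
  set z := iA h0 with hzdef
  intro L hL
  rw [sep_iff]
  intro g hg
  by_cases hgN : g ∈ L ⊔ Subgroup.zpowers z
  swap
  · obtain ⟨U, hU, hLU, hgU⟩ := sep _ (hL.sup (fg_zpowers z))
      ((le_sup_right : _ ≤ L ⊔ Subgroup.zpowers z) (Subgroup.mem_zpowers z)) g hgN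
    exact ⟨U, hU, le_sup_left.trans hLU, hgU⟩
  rw [Subgroup.mem_sup_of_normal_right] at hgN
  obtain ⟨l, hl, _, ⟨k, rfl⟩, rfl⟩ := hgN
  have hk : z ^ k ∉ L := fun h => hg (L.mul_mem hl h)
  obtain ⟨m, hm, hkm⟩ := choose_m L z zn k hk
  obtain ⟨P, _, _, ψ, hψ⟩ := exists_psi iA iB h0 k0 hord hn kn huniv hA hB m hm
  let L1 := L ⊔ Subgroup.zpowers (z ^ m)
  have hL1 : L1.FG := hL.sup (fg_zpowers _)
  have hLL1 : L ≤ L1 := le_sup_left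
  suffices h : ∃ V : Subgroup G, V.FiniteIndex ∧ L1 ≤ V ∧ z ^ k ∉ V by
    obtain ⟨V, hV, hLV, hkV⟩ := h
    refine ⟨V, hV, hLL1.trans hLV, fun h => hkV ?_⟩
    exact (V.mul_mem_cancel_left (hLV (hLL1 hl))).1 h
  by_cases hg1 : ψ (z ^ k) ∈ L1.map ψ
  swap
  · exact ⟨(L1.map ψ).comap ψ, comap_fi _ _, Subgroup.le_comap_map _ _, hg1⟩
  obtain ⟨l1, hl1, hl1k⟩ := hg1
  let n := l1⁻¹ * z ^ k
  have hnψ : n ∈ ψ.ker := by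
    rw [MonoidHom.mem_ker, map_mul, map_inv, hl1k, inv_mul_cancel]
  have hnL1 : n ∉ L1 := fun h => hkm ((L1.mul_mem_cancel_left (L1.inv_mem hl1)).1 h)
  let L0 := L1 ⊓ ψ.ker
  have hL0 : L0.FG := fg_inf_fi _ _ hL1
  have hnL0 : n ∉ L0 ⊔ Subgroup.zpowers z := by
    intro h
    rw [Subgroup.mem_sup_of_normal_right] at h
    obtain ⟨l0, hl0, _, ⟨j, rfl⟩, hlj⟩ := h
    have hlj' : l0 * z ^ j = n := hlj
    have h1 : ψ (z ^ j) = 1 := by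
      have := congrArg ψ hlj'
      rwa [map_mul, MonoidHom.mem_ker.1 hl0.2, MonoidHom.mem_ker.1 hnψ, one_mul] at this
    apply hnL1
    rw [← hlj']
    exact L1.mul_mem hl0.1 ((le_sup_right : _ ≤ L1) (hψ j h1))
  obtain ⟨U, hU, hLU, hnU⟩ := sep _ (hL0.sup (fg_zpowers z))
      ((le_sup_right : _ ≤ L0 ⊔ Subgroup.zpowers z) (Subgroup.mem_zpowers z)) n hnL0
  let M := (U ⊓ ψ.ker).normalCore
  have hMle : M ≤ U ⊓ ψ.ker := Subgroup.normalCore_le _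
  refine ⟨L1 ⊔ M, Subgroup.finiteIndex_of_le (le_sup_right : M ≤ L1 ⊔ M), le_sup_left, ?_⟩
  intro h
  have hnV : n ∈ L1 ⊔ M :=
    Subgroup.mul_mem _ (Subgroup.inv_mem _ ((le_sup_left : L1 ≤ L1 ⊔ M) hl1)) h
  rw [Subgroup.mem_sup_of_normal_right] at hnV
  obtain ⟨l2, hl2, y, hy, hly⟩ := hnV
  have hy' := hMle hy
  have h2 : l2 ∈ ψ.ker := (ψ.ker.mul_mem_cancel_right hy'.2).1 (hly ▸ hnψ)
  apply hnU
  rw [← hly]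
  exact U.mul_mem (hLU ((le_sup_left : L0 ≤ _) ⟨hl2, h2⟩)) hy'.1

end SepAux

/-- If `A` and `B` are subgroup separable and `H` and `K` are cyclic normal subgroups of `A`
and `B` respectively, then the generalized free product `(A ∗ B; H = K, φ)` is subgroup
separable. -/
theorem subgroupSeparable_amalgamatedProduct_of_cyclic {A B : Type} [Group A] [Group B]
    (H : Subgroup A) (K : Subgroup B) (φ : H ≃* K)
    (hHnormal : H.Normal) (hKnormal : K.Normal)
    (hHcyclic : IsCyclic ↥H) (hKcyclic : IsCyclic ↥K)
    (hA : SubgroupSeparable A) (hB : SubgroupSeparable B) :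
    SubgroupSeparable (AmalgamatedProduct H K φ) := by
  obtain ⟨⟨h0, hh0⟩, hgenH⟩ := hHcyclic.exists_generator
  have hH0 : Subgroup.zpowers h0 = H := by
    apply le_antisymm
    · rw [Subgroup.zpowers_le]
      exact hh0
    · intro x hx
      obtain ⟨j, hj⟩ := hgenH ⟨x, hx⟩
      exact ⟨j, congrArg Subtype.val hj⟩
  let k0 : K := φ ⟨h0, hh0⟩
  have hK0 : Subgroup.zpowers (k0 : B) = K := by
    apply le_antisymm
    · rw [Subgroup.zpowers_le]
      exact k0.2
    · intro x hx
      obtain ⟨j, hj⟩ := hgenH (φ.symm ⟨x, hx⟩)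
      refine ⟨j, ?_⟩
      have h1 : (⟨h0, hh0⟩ : H) ^ j = φ.symm ⟨x, hx⟩ := hj
      have h2 := congrArg φ h1
      rw [map_zpow, MulEquiv.apply_symm_apply] at h2
      exact congrArg Subtype.val h2
  let iA : A →* AmalgamatedProduct H K φ :=
    Monoid.PushoutI.of (φ := amalgMaps H K φ) (G := amalgFactor A B) true
  let iB : B →* AmalgamatedProduct H K φ :=
    Monoid.PushoutI.of (φ := amalgMaps H K φ) (G := amalgFactor A B) false
  have hbaseA : ∀ h : H, iA h = Monoid.PushoutI.base (amalgMaps H K φ) h := fun h =>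
    Monoid.PushoutI.of_apply_eq_base (amalgMaps H K φ) true h
  have hbaseB : ∀ h : H, iB (φ h) = Monoid.PushoutI.base (amalgMaps H K φ) h := fun h =>
    Monoid.PushoutI.of_apply_eq_base (amalgMaps H K φ) false h
  refine SepAux.main iA iB ?_ h0 k0 ?_ ?_ ?_ ?_ ?_ hA hB
  · rw [eq_top_iff]
    rintro x -
    induction x using Monoid.PushoutI.induction_on with
    | of i g =>
      apply Subgroup.subset_closure
      cases i
      · exact Or.inr ⟨g, rfl⟩
      · exact Or.inl ⟨g, rfl⟩
    | base h =>
      apply Subgroup.subset_closure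
      exact Or.inl ⟨h, hbaseA h⟩
    | mul x y hx hy => exact Subgroup.mul_mem _ hx hy
  · exact (hbaseA ⟨h0, hh0⟩).trans (hbaseB ⟨h0, hh0⟩).symm
  · intro k
    have h1 : (⟨h0, hh0⟩ : H) ^ k = 1 ↔ k0 ^ k = 1 := by
      rw [← map_zpow, EmbeddingLike.map_eq_one_iff]
    rw [Subtype.ext_iff, Subtype.ext_iff] at h1
    exact h1
  · rw [hH0]
    exact hHnormal
  · rw [hK0]
    exact hKnormal
  · intro P _ f f' hff
    have hagree : ∀ h : H, f h = f' (φ h) := by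
      intro h
      obtain ⟨j, rfl⟩ := hgenH h
      have h3 : f (h0 ^ j) = f' ((k0 : B) ^ j) := by
        rw [map_zpow, map_zpow, hff]
      simpa [k0] using h3
    let ff : ∀ b, amalgFactor A B b →* P := fun b => match b with
      | true => f
      | false => f'
    have hf : ∀ b, (ff b).comp (amalgMaps H K φ b) = f.comp H.subtype := by
      intro b
      cases b
      · ext h
        exact (hagree h).symm
      · rfl
    refine ⟨Monoid.PushoutI.lift ff (f.comp H.subtype) hf, fun a => ?_, fun b => ?_⟩
    · exact Monoid.PushoutI.lift_of ff (f.comp H.subtype) hf (i := true) a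
    · exact Monoid.PushoutI.lift_of ff (f.comp H.subtype) hf (i := false) b
end

section
/- Let m be a positive integer and let n be an integer with |n| = m. Then the Baumslag–Solitar group G(m,n) = ⟨a, b ; a⁻¹bᵐa = bⁿ⟩ is subgroup separable. -/
/-- The single defining relation `a⁻¹ bᵐ a (bⁿ)⁻¹` of the Baumslag–Solitar group, as a
subset of the free group on two generators (`false` plays the role of `a`, `true` of `b`). -/
def bsRel (m n : ℤ) : Set (FreeGroup Bool) :=
  {(FreeGroup.of false)⁻¹ * (FreeGroup.of true) ^ m * FreeGroup.of false *
    ((FreeGroup.of true) ^ n)⁻¹}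

/-- The Baumslag–Solitar group `G(m,n) = ⟨a, b ; a⁻¹ bᵐ a = bⁿ⟩`. -/
abbrev BaumslagSolitar (m n : ℤ) : Type :=
  PresentedGroup (bsRel m n)

namespace BSProof

section generic
variable {Y : Type} {G : Type} [Group G] [MulAction G Y]

/-- powers of `b` on the doubled set -/
def bp (b : G) (ε : ℤ) (X : Set Y) (hX : ∀ (i : ℤ) (x : Y), x ∈ X → b ^ i • x ∈ X) (j : ℤ) :
    Equiv.Perm (X × Bool) where
  toFun p := match p with
    | (x, false) => (⟨b ^ j • x.1, hX _ _ x.2⟩, false)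
    | (x, true) => (⟨b ^ (ε * j) • x.1, hX _ _ x.2⟩, true)
  invFun p := match p with
    | (x, false) => (⟨b ^ (-j) • x.1, hX _ _ x.2⟩, false)
    | (x, true) => (⟨b ^ (-(ε * j)) • x.1, hX _ _ x.2⟩, true)
  left_inv := by rintro ⟨x, _ | _⟩ <;> simp
  right_inv := by rintro ⟨x, _ | _⟩ <;> simp

def bpHom (b : G) (ε : ℤ) (X : Set Y) (hX : ∀ (i : ℤ) (x : Y), x ∈ X → b ^ i • x ∈ X) :
    Multiplicative ℤ →* Equiv.Perm (X × Bool) where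
  toFun j := bp b ε X hX j.toAdd
  map_one' := by ext ⟨x, _ | _⟩ <;> simp [bp]
  map_mul' i j := by
    ext ⟨x, _ | _⟩ <;> simp [bp, mul_add, zpow_add, mul_smul]

theorem bp_zpow (b : G) (ε : ℤ) (X : Set Y) (hX : ∀ (i : ℤ) (x : Y), x ∈ X → b ^ i • x ∈ X)
    (j : ℤ) : (bp b ε X hX 1) ^ j = bp b ε X hX j := by
  have := map_zpow (bpHom b ε X hX) (Multiplicative.ofAdd 1) j
  rw [← ofAdd_zsmul] at this
  simpa [bpHom] using this.symm

open Classical in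
/-- the completion of the partial action of `a` -/
noncomputable def ap (a : G) (X : Set Y) : Equiv.Perm (X × Bool) where
  toFun p := match p with
    | (x, false) => if h : a • x.1 ∈ X then (⟨a • x.1, h⟩, false) else (x, true)
    | (x, true) => if h : a⁻¹ • x.1 ∈ X then (⟨a⁻¹ • x.1, h⟩, true) else (x, false)
  invFun p := match p with
    | (x, false) => if h : a⁻¹ • x.1 ∈ X then (⟨a⁻¹ • x.1, h⟩, false) else (x, true)
    | (x, true) => if h : a • x.1 ∈ X then (⟨a • x.1, h⟩, true) else (x, false)
  left_inv := by
    rintro ⟨x, _ | _⟩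
    · by_cases h : a • x.1 ∈ X <;> simp [h]
    · by_cases h : a⁻¹ • x.1 ∈ X <;> simp [h]
  right_inv := by
    rintro ⟨x, _ | _⟩
    · by_cases h : a⁻¹ • x.1 ∈ X <;> simp [h]
    · by_cases h : a • x.1 ∈ X <;> simp [h]

theorem ap_rel (a b : G) (m ε : ℤ) (hε : ε * ε = 1)
    (hab : b ^ m * a = a * b ^ (ε * m)) (X : Set Y)
    (hX : ∀ (i : ℤ) (x : Y), x ∈ X → b ^ i • x ∈ X) :
    bp b ε X hX m * ap a X = ap a X * bp b ε X hX (ε * m) := by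
  have hX' : ∀ (i : ℤ) (x : Y), b ^ i • x ∈ X ↔ x ∈ X := fun i x =>
    ⟨fun h => by simpa using hX (-i) _ h, hX i x⟩
  have e1 : ∀ x : Y, a • b ^ (ε * m) • x = b ^ m • a • x := fun x => by
    rw [← mul_smul, ← mul_smul, hab]
  have e2 : ∀ x : Y, a⁻¹ • b ^ m • x = b ^ (ε * m) • a⁻¹ • x := fun x => by
    rw [inv_smul_eq_iff, e1, smul_inv_smul]
  have e3 : ε * (ε * m) = m := by rw [← mul_assoc, hε, one_mul]
  ext1 ⟨x, _ | _⟩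
  · by_cases h : a • x.1 ∈ X
    · simp [ap, bp, h, e1, hX']
    · simp [ap, bp, h, e1, hX']
  · by_cases h : a⁻¹ • x.1 ∈ X
    · simp [ap, bp, h, e2, e3, hX']
    · simp [ap, bp, h, e2, e3, hX']

end generic

abbrev A (m n : ℤ) : BaumslagSolitar m n := PresentedGroup.of false
abbrev B (m n : ℤ) : BaumslagSolitar m n := PresentedGroup.of true

theorem rel (m n : ℤ) : B m n ^ m * A m n = A m n * B m n ^ n := by
  have h : (PresentedGroup.mk (bsRel m n)) ((FreeGroup.of false)⁻¹ * (FreeGroup.of true) ^ m *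
      FreeGroup.of false * ((FreeGroup.of true) ^ n)⁻¹) = 1 :=
    PresentedGroup.one_of_mem (by simp [bsRel])
  simp only [map_mul, map_inv, map_zpow] at h
  have h2 : (A m n)⁻¹ * B m n ^ m * A m n = B m n ^ n := by
    exact mul_inv_eq_one.mp h
  rw [← h2]; group

theorem ind (m n : ℤ) (P : BaumslagSolitar m n → Prop) (h1 : P 1) (ha : P (A m n))
    (hb : P (B m n)) (hmul : ∀ x y, P x → P y → P (x * y)) (hinv : ∀ x, P x → P x⁻¹)
    (g : BaumslagSolitar m n) : P g := by
  have hg : g ∈ Subgroup.closure (Set.range (PresentedGroup.of (rels := bsRel m n))) := by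
    rw [PresentedGroup.closure_range_of]; trivial
  induction hg using Subgroup.closure_induction with
  | mem x hx => obtain ⟨i, rfl⟩ := hx; cases i; exacts [ha, hb]
  | one => exact h1
  | mul x y _ _ hx hy => exact hmul x y hx hy
  | inv x _ hx => exact hinv x hx

theorem conj_c (m ε : ℤ) (hε : ε = 1 ∨ ε = -1) (g : BaumslagSolitar m (ε * m)) :
    ∃ e : ℤ, (e = 1 ∨ e = -1) ∧
      B m (ε * m) ^ m * g = g * (B m (ε * m) ^ m) ^ e := by
  induction g using ind with
  | h1 => exact ⟨1, by simp⟩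
  | ha => exact ⟨ε, hε, by rw [rel, ← zpow_mul, mul_comm m]⟩
  | hb => exact ⟨1, by simp, by group⟩
  | hmul x y hx hy =>
    obtain ⟨e, he, hx⟩ := hx
    obtain ⟨f, hf, hy⟩ := hy
    refine ⟨f * e, by rcases he with rfl | rfl <;> rcases hf with rfl | rfl <;> simp, ?_⟩
    have : SemiconjBy y (((B m (ε * m)) ^ m) ^ f) (B m (ε * m) ^ m) := hy.symm
    have := this.zpow_right e
    rw [← mul_assoc, hx, mul_assoc, ← this.eq, ← zpow_mul, mul_assoc]
  | hinv x hx =>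
    obtain ⟨e, he, hx⟩ := hx
    refine ⟨e, he, ?_⟩
    have : SemiconjBy x (((B m (ε * m)) ^ m) ^ e) (B m (ε * m) ^ m) := hx.symm
    have h2 := (this.zpow_right e).inv_symm_left.eq
    rw [h2, ← zpow_mul]
    rcases he with rfl | rfl <;> simp

theorem core (m ε : ℤ) (hm : 0 < m) (hε : ε = 1 ∨ ε = -1)
    (H : Subgroup (BaumslagSolitar m (ε * m))) (hH : H.FG) (k : ℤ) (hk : 0 < k)
    (hkH : ∀ g : BaumslagSolitar m (ε * m), g⁻¹ * B m (ε * m) ^ (m * k) * g ∈ H) :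
    FinitelySeparable H := by
  intro g hg
  set a : BaumslagSolitar m (ε * m) := A m (ε * m)
  set b : BaumslagSolitar m (ε * m) := B m (ε * m)
  have hεε : ε * ε = 1 := by rcases hε with rfl | rfl <;> simp
  have hab : b ^ m * a = a * b ^ (ε * m) := rel m (ε * m)
  -- the homomorphisms
  have hrel : ∀ (X : Set ((BaumslagSolitar m (ε * m)) ⧸ H)) (hX : ∀ (i : ℤ) (x : (BaumslagSolitar m (ε * m)) ⧸ H), x ∈ X → b ^ i • x ∈ X),
      ∃ f : (BaumslagSolitar m (ε * m)) →* Equiv.Perm (X × Bool), f a = ap a X ∧ f b = bp b ε X hX 1 := by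
    intro X hX
    let φ : Bool → Equiv.Perm (X × Bool) := fun t => match t with
      | false => ap a X
      | true => bp b ε X hX 1
    have hφ : ∀ r ∈ bsRel m (ε * m), FreeGroup.lift φ r = 1 := by
      intro r hr
      rw [bsRel, Set.mem_singleton_iff] at hr
      subst hr
      simp only [map_mul, map_inv, map_zpow, FreeGroup.lift_apply_of, φ, bp_zpow]
      rw [mul_inv_eq_one, mul_assoc, ap_rel a b m ε hεε hab X hX, inv_mul_cancel_left]
    exact ⟨PresentedGroup.toGroup hφ, PresentedGroup.toGroup.of hφ, PresentedGroup.toGroup.of hφ⟩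
  choose f hfa hfb using hrel
  -- local agreement
  have loc : ∀ (w : (BaumslagSolitar m (ε * m))) (x : (BaumslagSolitar m (ε * m)) ⧸ H), ∃ S : Finset ((BaumslagSolitar m (ε * m)) ⧸ H), ∀ X hX, (↑S ⊆ X) →
      ∃ (h1 : x ∈ X) (h2 : w • x ∈ X), f X hX w (⟨x, h1⟩, false) = (⟨w • x, h2⟩, false) := by
    classical
    intro w
    induction w using ind with
    | h1 =>
      intro x
      refine ⟨{x}, fun X hX hS => ?_⟩
      have : x ∈ X := hS (by simp)
      exact ⟨this, by simpa using this, by simp⟩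
    | ha =>
      intro x
      refine ⟨{x, a • x}, fun X hX hS => ?_⟩
      have h1 : x ∈ X := hS (by simp)
      have h2 : a • x ∈ X := hS (by simp)
      refine ⟨h1, h2, ?_⟩
      have := hfa X hX
      change f X hX a _ = _
      rw [this]
      simp [ap, h2]
      rfl
    | hb =>
      intro x
      refine ⟨{x}, fun X hX hS => ?_⟩
      have h1 : x ∈ X := hS (by simp)
      have h2 : b • x ∈ X := by simpa using hX 1 x h1
      refine ⟨h1, h2, ?_⟩
      have := hfb X hX
      change f X hX b _ = _
      rw [this]
      simp [bp]
      rfl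
    | hmul u v hu hv =>
      intro x
      obtain ⟨S, hS⟩ := hv x
      obtain ⟨T, hT⟩ := hu (v • x)
      refine ⟨S ∪ T, fun X hX h => ?_⟩
      rw [Finset.coe_union, Set.union_subset_iff] at h
      obtain ⟨h1, h2, h3⟩ := hS X hX h.1
      obtain ⟨h4, h5, h6⟩ := hT X hX h.2
      refine ⟨h1, by rwa [mul_smul], ?_⟩
      rw [map_mul, Equiv.Perm.mul_apply, h3, h6]
      simp [mul_smul]
    | hinv u hu =>
      intro x
      obtain ⟨S, hS⟩ := hu (u⁻¹ • x)
      refine ⟨S, fun X hX h => ?_⟩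
      obtain ⟨h1, h2, h3⟩ := hS X hX h
      refine ⟨by simpa using h2, h1, ?_⟩
      rw [map_inv, Equiv.Perm.inv_eq_iff_eq, h3]
      simp
  choose S hS using loc
  -- finite b-closed sets
  have hN : ∀ x : (BaumslagSolitar m (ε * m)) ⧸ H, b ^ (m * k) • x = x := by
    intro x
    induction x using QuotientGroup.induction_on with
    | H z =>
      rw [MulAction.Quotient.smul_mk, eq_comm, QuotientGroup.eq]
      simpa [mul_assoc] using hkH z
  have hN' : ∀ (j : ℤ) (x : (BaumslagSolitar m (ε * m)) ⧸ H), b ^ (m * k * j) • x = x := by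
    intro j x
    rw [zpow_mul]
    have : b ^ (m * k) ∈ MulAction.stabilizer (BaumslagSolitar m (ε * m)) x := hN x
    exact (MulAction.stabilizer (BaumslagSolitar m (ε * m)) x).zpow_mem this j
  obtain ⟨T, hT⟩ := hH
  let x0 : (BaumslagSolitar m (ε * m)) ⧸ H := ((1 : (BaumslagSolitar m (ε * m))) : (BaumslagSolitar m (ε * m)) ⧸ H)
  classical
  let S0 : Finset ((BaumslagSolitar m (ε * m)) ⧸ H) := S g x0 ∪ T.biUnion (fun t => S t x0)
  let X : Set ((BaumslagSolitar m (ε * m)) ⧸ H) := {x | ∃ i : ℤ, ∃ s ∈ S0, x = b ^ i • s}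
  have hX : ∀ (i : ℤ) (x : (BaumslagSolitar m (ε * m)) ⧸ H), x ∈ X → b ^ i • x ∈ X := by
    rintro i _ ⟨j, s, hs, rfl⟩
    exact ⟨i + j, s, hs, by rw [zpow_add, mul_smul]⟩
  have hXS : ↑S0 ⊆ X := fun s hs => ⟨0, s, hs, by simp⟩
  have hmk : 0 < m * k := mul_pos hm hk
  have hfin : X.Finite := by
    apply ((Finset.Ico 0 (m * k) ×ˢ S0).image (fun p => b ^ p.1 • p.2)).finite_toSet.subset
    rintro _ ⟨i, s, hs, rfl⟩
    simp only [Finset.coe_image, Set.mem_image, Prod.exists]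
    refine ⟨i % (m * k), s, ?_, ?_⟩
    · simp [hs, Int.emod_nonneg _ hmk.ne', Int.emod_lt_of_pos _ hmk]
    · conv_rhs => rw [← Int.emod_add_mul_ediv i (m * k), zpow_add, mul_smul, hN']
  have : Finite X := hfin
  let F := f X hX
  obtain ⟨p1, p2, p3⟩ := hS g x0 X hX
    (fun s hs => hXS (by simp only [S0, Finset.coe_union]; exact Or.inl hs))
  have hfix : H ≤ (MulAction.stabilizer (Equiv.Perm (X × Bool))
      ((⟨x0, p1⟩, false) : X × Bool)).comap F := by
    refine le_of_eq_of_le hT.symm ((Subgroup.closure_le _).2 ?_)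
    intro t ht
    obtain ⟨q1, q2, q3⟩ := hS t x0 X hX
      (fun s hs => hXS (by
        simp only [S0, Finset.coe_union]; right
        exact Finset.mem_coe.2 (Finset.mem_biUnion.2 ⟨t, ht, hs⟩)))
    change F t _ = _
    rw [show F t _ = _ from q3]
    have htH : t ∈ H := hT.le (Subgroup.subset_closure ht)
    have : t • x0 = x0 := by
      rw [MulAction.Quotient.smul_mk, eq_comm, QuotientGroup.eq]
      simpa using htH
    simp [this]
  refine ⟨F.range, inferInstance, inferInstance, F.rangeRestrict, F.rangeRestrict_surjective, ?_⟩
  rintro ⟨h, hh, he⟩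
  have he' : F h = F g := congrArg Subtype.val he
  have h1 : F h (⟨x0, p1⟩, false) = (⟨x0, p1⟩, false) := hfix hh
  rw [he', show F g _ = _ from p3] at h1
  have h2 : g • x0 = x0 := congrArg (fun p => p.1.1) h1
  rw [MulAction.Quotient.smul_mk, eq_comm, QuotientGroup.eq] at h2
  exact hg (by simpa using h2)

theorem main (m ε : ℤ) (hm : 0 < m) (hε : ε = 1 ∨ ε = -1) :
    SubgroupSeparable (BaumslagSolitar m (ε * m)) := by
  intro H hH g hg
  set b := B m (ε * m)
  have hconj : ∀ (j : ℤ) (x : BaumslagSolitar m (ε * m)),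
      ∃ i : ℤ, x⁻¹ * (b ^ m) ^ j * x = ((b ^ m) ^ j) ^ i := by
    intro j x
    obtain ⟨e, -, h⟩ := conj_c m ε hε x
    refine ⟨e, ?_⟩
    have : SemiconjBy x ((b ^ m) ^ e) (b ^ m) := h.symm
    have h2 := (this.zpow_right j).eq
    rw [mul_assoc, ← h2, inv_mul_cancel_left, zpow_comm]
  have hnorm : ∀ j : ℤ, (Subgroup.zpowers ((b ^ m) ^ j)).Normal := by
    intro j
    refine ⟨?_⟩
    rintro _ ⟨r, rfl⟩ x
    obtain ⟨i, hi⟩ := hconj j x⁻¹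
    rw [inv_inv] at hi
    have : x * ((b ^ m) ^ j) ^ r * x⁻¹ = (x * (b ^ m) ^ j * x⁻¹) ^ r := by
      rw [conj_zpow]
    simp only [this, hi]
    exact ⟨i * r, by simp only [zpow_mul]⟩
  have hk : ∃ k : ℤ, 0 < k ∧ g ∉ H ⊔ Subgroup.zpowers ((b ^ m) ^ k) := by
    by_contra! hcon
    have key : ∀ k : ℤ, 0 < k → ∃ h ∈ H, ∃ r : ℤ, h * (b ^ m) ^ (k * r) = g := by
      intro k hk
      have := hnorm k
      obtain ⟨h, hh, z, ⟨r, rfl⟩, e⟩ := Subgroup.mem_sup_of_normal_right.1 (hcon k hk)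
      exact ⟨h, hh, r, by rw [zpow_mul]; exact e⟩
    by_cases hex : ∃ k : ℤ, 0 < k ∧ (b ^ m) ^ k ∈ H
    · obtain ⟨k, hk, hkH⟩ := hex
      obtain ⟨h, hh, r, rfl⟩ := key k hk
      exact hg (H.mul_mem hh (by rw [zpow_mul]; exact H.zpow_mem hkH r))
    · push Not at hex
      have hz : ∀ j : ℤ, (b ^ m) ^ j ∈ H → j = 0 := by
        intro j hj
        rcases lt_trichotomy j 0 with h | h | h
        · exact absurd (by rw [zpow_neg]; exact H.inv_mem hj) (hex (-j) (by omega))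
        · exact h
        · exact absurd hj (hex j h)
      obtain ⟨h1, hh1, r1, e1⟩ := key 1 one_pos
      obtain ⟨h2, hh2, r2, e2⟩ := key (|r1| + 1) (by positivity)
      rw [one_mul] at e1
      have h3 : (b ^ m) ^ (r1 - (|r1| + 1) * r2) = h1⁻¹ * h2 := by
        rw [zpow_sub, mul_inv_eq_iff_eq_mul, mul_assoc, e2, ← e1, inv_mul_cancel_left]
      have h4 := hz _ (h3 ▸ H.mul_mem (H.inv_mem hh1) hh2)
      have h5 : r1 = 0 := Int.eq_zero_of_abs_lt_dvd (m := |r1| + 1) ⟨r2, by linarith⟩ (by simp)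
      subst h5
      apply hg
      rw [← e1]; simpa using hh1
  obtain ⟨k, hk, hgk⟩ := hk
  have hFG : (H ⊔ Subgroup.zpowers ((b ^ m) ^ k)).FG :=
    hH.sup ⟨{(b ^ m) ^ k}, by simp [Subgroup.zpowers_eq_closure]⟩
  obtain ⟨Q, i1, i2, f, hf, hfg⟩ := core m ε hm hε _ hFG k hk (by
    intro x
    obtain ⟨i, hi⟩ := hconj k x
    rw [zpow_mul, hi]
    exact Subgroup.mem_sup_right ⟨i, rfl⟩) g hgk
  exact ⟨Q, i1, i2, f, hf, fun h => hfg (Subgroup.map_mono le_sup_left h)⟩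

end BSProof

/-- If `|n| = m > 0` then the Baumslag–Solitar group `G(m,n)` is subgroup separable. -/
theorem subgroupSeparable_baumslagSolitar (m n : ℤ) (hm : 0 < m) (hn : |n| = m) :
    SubgroupSeparable (BaumslagSolitar m n) := by
  have : n = 1 * m ∨ n = -1 * m := by
    rcases abs_choice n with h | h <;> omega
  rcases this with rfl | rfl
  · exact BSProof.main m 1 hm (Or.inl rfl)
  · exact BSProof.main m (-1) hm (Or.inr rfl)
end

section
/- Let N be a normal subgroup of a group L. If N is finitely generated as a group and L is subgroup separable, then the quotient group L/N is subgroup separable. -/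
theorem lift_finset_aux {L : Type*} [Group L] (N : Subgroup L) [N.Normal]
    (S : Finset (L ⧸ N)) :
    ∃ T : Finset L, (QuotientGroup.mk' N) '' (T : Set L) = (S : Set (L ⧸ N)) := by
  classical
  refine ⟨S.image Quotient.out, ?_⟩
  rw [Finset.coe_image, Set.image_image]
  simp

/-- If `N` is a finitely generated normal subgroup of a subgroup separable group `L`,
then the quotient `L / N` is subgroup separable. -/
theorem subgroupSeparable_quotient {L : Type*} [Group L] (N : Subgroup L) [N.Normal]
    (hN : N.FG) (hL : SubgroupSeparable L) :
    SubgroupSeparable (L ⧸ N) := by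
  classical
  intro H hH g hg
  obtain ⟨x, rfl⟩ := QuotientGroup.mk'_surjective N g
  have hKFG : (H.comap (QuotientGroup.mk' N)).FG := by
    obtain ⟨S, rfl⟩ := hH
    obtain ⟨T, hT⟩ := lift_finset_aux N S
    have hEq : (Subgroup.closure (S : Set (L ⧸ N))).comap (QuotientGroup.mk' N)
        = Subgroup.closure (T : Set L) ⊔ N := by
      have h1 : Subgroup.closure (S : Set (L ⧸ N))
          = (Subgroup.closure (T : Set L)).map (QuotientGroup.mk' N) := by
        rw [MonoidHom.map_closure, ← hT]
      rw [h1, Subgroup.comap_map_eq, QuotientGroup.ker_mk']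
    rw [hEq]
    exact Subgroup.FG.sup ⟨T, rfl⟩ hN
  obtain ⟨Q, _, _, f, hf, hx⟩ := hL _ hKFG x hg
  have hM : (N.map f).Normal := Subgroup.Normal.map inferInstance f hf
  refine ⟨Q ⧸ N.map f, inferInstance, inferInstance,
    QuotientGroup.map N (N.map f) f (Subgroup.le_comap_map f N), ?_, ?_⟩
  · intro q
    obtain ⟨q, rfl⟩ := QuotientGroup.mk'_surjective _ q
    obtain ⟨y, rfl⟩ := hf q
    exact ⟨(y : L ⧸ N), rfl⟩
  · rintro ⟨h, hh, he⟩
    obtain ⟨y, rfl⟩ := QuotientGroup.mk'_surjective N h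
    have he' : ((f y : Q) : Q ⧸ N.map f) = (f x : Q) := he
    rw [QuotientGroup.eq] at he'
    obtain ⟨n, hn, hne⟩ := he'
    apply hx
    refine ⟨y * n, ?_, ?_⟩
    · have h0 : (QuotientGroup.mk' N) n = 1 := (QuotientGroup.eq_one_iff n).2 hn
      show (QuotientGroup.mk' N) (y * n) ∈ H
      rw [map_mul, h0, mul_one]
      exact hh
    · rw [map_mul, hne, mul_inv_cancel_left]
end

section
/- Every non-cyclic free group contains a subgroup which is not finitely separable. -/
theorem shift_inv_pow (n : ℕ) :
    (((Equiv.addRight (1 : ℤ))⁻¹ : Equiv.Perm ℤ) ^ n) 0 = -(n : ℤ) := by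
  induction n with
  | zero => simp
  | succ k ih =>
    rw [pow_succ', Equiv.Perm.mul_apply, ih, Equiv.Perm.inv_eq_iff_eq]
    simp

/-- Every non-cyclic free group (a free group on a set with at least two elements)
contains a subgroup which is not finitely separable. -/
theorem exists_not_finitelySeparable_of_freeGroup {α : Type} (hα : ∃ a b : α, a ≠ b) :
    ∃ H : Subgroup (FreeGroup α), ¬ FinitelySeparable H := by
  classical
  obtain ⟨a, b, hab⟩ := hα
  let e : Equiv.Perm ℤ := Equiv.addRight 1
  let s : Equiv.Perm ℤ := Equiv.swap 0 1
  let F : FreeGroup α →* Equiv.Perm ℤ := FreeGroup.lift (fun c => if c = a then e else s)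
  have hFa : F (FreeGroup.of a) = e := by simp [F]
  have hFb : F (FreeGroup.of b) = s := by simp [F, hab.symm]
  have hm : ∀ g, g ∈ (MulAction.stabilizer (Equiv.Perm ℤ) (0 : ℤ)).comap F ↔ F g 0 = 0 := by
    intro g
    rw [Subgroup.mem_comap, MulAction.mem_stabilizer_iff, Equiv.Perm.smul_def]
  refine ⟨(MulAction.stabilizer (Equiv.Perm ℤ) (0 : ℤ)).comap F, fun h => ?_⟩
  obtain ⟨Q, _, _, f, -, hf⟩ := h (FreeGroup.of b) (by
    rw [hm, hFb]
    simp [s])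
  apply hf
  have hc : 0 < Nat.card Q := Nat.card_pos
  refine ⟨FreeGroup.of a ^ Nat.card Q * FreeGroup.of b * ((FreeGroup.of a) ^ Nat.card Q)⁻¹, ?_, ?_⟩
  · rw [SetLike.mem_coe, hm]
    have h1 : ((e ^ Nat.card Q)⁻¹) 0 = -(Nat.card Q : ℤ) := by
      rw [← inv_pow]; exact shift_inv_pow _
    rw [map_mul, map_mul, map_inv, map_pow, hFa, hFb, Equiv.Perm.mul_apply, Equiv.Perm.mul_apply,
      h1, Equiv.swap_apply_of_ne_of_ne (by omega) (by omega), ← h1]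
    simp
  · simp
end

section
/- Let n be an integer with |n| > 1 and let G(1,n) = ⟨a, b ; a⁻¹ba = bⁿ⟩ be the Baumslag–Solitar group. Then the cyclic subgroup of G(1,n) generated by the element b is not finitely separable in G(1,n). -/
theorem bs_conj {Q : Type*} [Group Q] (a b : Q) (n : ℤ) (h : a⁻¹ * b * a = b ^ n) (k : ℕ) :
    (a ^ k)⁻¹ * b * a ^ k = b ^ (n ^ k) := by
  induction k with
  | zero => simp
  | succ k ih =>
    have e : (a ^ (k+1))⁻¹ * b * a ^ (k+1) = a⁻¹ * ((a ^ k)⁻¹ * b * a ^ k) * a := by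
      rw [pow_succ]; group
    have e2 : a⁻¹ * b ^ (n ^ k) * a = (a⁻¹ * b * a) ^ (n ^ k) := by
      have := conj_zpow (a := a⁻¹) (b := b) (i := n ^ k)
      simpa using this.symm
    rw [e, ih, e2, h, ← zpow_mul, pow_succ, mul_comm]

theorem bs_rel (n : ℤ) : (PresentedGroup.of false : BaumslagSolitar 1 n)⁻¹ *
    PresentedGroup.of true * PresentedGroup.of false = (PresentedGroup.of true) ^ n := by
  have h := PresentedGroup.one_of_mem (rels := bsRel 1 n) (x := _) (Set.mem_singleton _)
  simp only [map_mul, map_inv, map_zpow, zpow_one] at h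
  exact mul_inv_eq_one.mp h

theorem bs_not_mem (n : ℤ) (hn : 1 < |n|) :
    (PresentedGroup.of false * PresentedGroup.of true * (PresentedGroup.of false)⁻¹ :
      BaumslagSolitar 1 n) ∉ Subgroup.zpowers (PresentedGroup.of true : BaumslagSolitar 1 n) := by
  have h0 : n ≠ 0 := by rintro rfl; simp at hn
  have hq : (n : ℚ) ≠ 0 := by exact_mod_cast h0
  let A : Equiv.Perm ℚ := (Equiv.mulRight₀ (n : ℚ) hq)⁻¹
  let B : Equiv.Perm ℚ := Equiv.addRight 1
  let F : Bool → Equiv.Perm ℚ := fun x => if x then B else A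
  have hB : ∀ k : ℤ, ∀ x : ℚ, (B ^ k) x = x + k := by
    intro k x
    simp [B]
  have hAi : ∀ x, A⁻¹ x = x * n := by intro x; simp [A]
  have hA : ∀ x, A x = x / n := by
    intro x
    rw [eq_div_iff hq, ← hAi]; simp
  have hF : ∀ r ∈ bsRel 1 n, FreeGroup.lift F r = 1 := by
    intro r hr
    rw [Set.mem_singleton_iff.mp hr]
    simp only [map_mul, map_inv, map_zpow, FreeGroup.lift_apply_of]
    rw [mul_inv_eq_one]
    ext x
    change A⁻¹ ((B ^ (1:ℤ)) (A x)) = (B ^ n) x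
    rw [hB, hB, hAi, hA]
    field_simp
    push_cast
    ring
  rintro ⟨k, hk⟩
  have := congrArg (PresentedGroup.toGroup hF) hk
  simp only [map_mul, map_inv, map_zpow, PresentedGroup.toGroup.of] at this
  have h2 : (B ^ k) 0 = A ((B ^ (1:ℤ)) (A⁻¹ 0)) := by
    rw [zpow_one]
    exact congrArg (fun e : Equiv.Perm ℚ => e 0) this
  rw [hB, hB, hAi, hA] at h2
  field_simp at h2
  have h3 : n * k = 1 := by
    have : (n : ℚ) * k = 1 := by push_cast at h2; linarith
    exact_mod_cast this
  have := Int.isUnit_iff_abs_eq.mp (IsUnit.of_mul_eq_one _ h3)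
  omega

/-- If `|n| > 1` then the cyclic subgroup generated by `b` in the Baumslag–Solitar group
`G(1,n) = ⟨a, b ; a⁻¹ b a = bⁿ⟩` is not finitely separable. -/
theorem not_finitelySeparable_zpowers_b (n : ℤ) (hn : 1 < |n|) :
    ¬ FinitelySeparable
        (Subgroup.zpowers (PresentedGroup.of true : BaumslagSolitar 1 n)) := by
  intro H
  obtain ⟨Q, _, _, f, -, hf⟩ := H _ (bs_not_mem n hn)
  apply hf
  have hr := congrArg f (bs_rel n)
  simp only [map_mul, map_inv, map_zpow] at hr
  have hc := bs_conj _ _ n hr (orderOf (f (PresentedGroup.of false)) - 1)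
  have hp := orderOf_pos (f (PresentedGroup.of false))
  have hi : f (PresentedGroup.of false) ^ (orderOf (f (PresentedGroup.of false)) - 1)
      = (f (PresentedGroup.of false))⁻¹ := by
    rw [eq_inv_iff_mul_eq_one, ← pow_succ, Nat.sub_add_cancel hp, pow_orderOf_eq_one]
  rw [hi, inv_inv] at hc
  refine ⟨_, ⟨n ^ (orderOf (f (PresentedGroup.of false)) - 1), rfl⟩, ?_⟩
  simp only [map_mul, map_inv, map_zpow]
  exact hc.symm
end

section
/- Let m be a positive integer and let ε = ±1. Then the Baumslag–Solitar group G(m, εm) = ⟨a, b ; a⁻¹bᵐa = b^{εm}⟩ is isomorphic to the generalized free product of the group L = ⟨a, c ; a⁻¹ca = c^{ε}⟩ (which is the Baumslag–Solitar group G(1, ε)) and the infinite cyclic group ⟨b⟩, amalgamating the cyclic subgroup of L generated by c with the subgroup of ⟨b⟩ generated by bᵐ via the isomorphism sending c to bᵐ; moreover, the amalgamated subgroups ⟨c⟩ and ⟨bᵐ⟩ are normal in the respective factors. -/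
theorem bs_relation (m n : ℤ) :
    (PresentedGroup.of false : BaumslagSolitar m n)⁻¹ * PresentedGroup.of true ^ m *
      PresentedGroup.of false = PresentedGroup.of true ^ n := by
  have h := PresentedGroup.one_of_mem (rels := bsRel m n) (Set.mem_singleton _)
  simp only [map_mul, map_inv, map_zpow] at h
  exact mul_inv_eq_one.mp h

/-- Homomorphisms out of a Baumslag-Solitar group. -/
def bsLift {G : Type} [Group G] (m n : ℤ) (x y : G) (h : x⁻¹ * y ^ m * x = y ^ n) :
    BaumslagSolitar m n →* G :=
  PresentedGroup.toGroup (f := fun t : Bool => if t then y else x) (by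
    intro r hr
    rw [bsRel, Set.mem_singleton_iff] at hr
    subst hr
    simp [h])

theorem bsLift_false {G : Type} [Group G] (m n : ℤ) (x y : G) (h : x⁻¹ * y ^ m * x = y ^ n) :
    bsLift m n x y h (PresentedGroup.of false) = x := by
  simp [bsLift]

theorem bsLift_true {G : Type} [Group G] (m n : ℤ) (x y : G) (h : x⁻¹ * y ^ m * x = y ^ n) :
    bsLift m n x y h (PresentedGroup.of true) = y := by
  simp [bsLift]

theorem bs_normal (ε : ℤ) (hε : ε = 1 ∨ ε = -1) :
    (Subgroup.zpowers (PresentedGroup.of true : BaumslagSolitar 1 ε)).Normal := by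
  have h := bs_relation 1 ε
  rw [zpow_one] at h
  set c : BaumslagSolitar 1 ε := PresentedGroup.of true with hc
  set a : BaumslagSolitar 1 ε := PresentedGroup.of false with ha
  have hεε : ε * ε = 1 := by rcases hε with rfl | rfl <;> norm_num
  have h1 : ∀ k : ℤ, a⁻¹ * c ^ k * a = c ^ (ε * k) := by
    intro k
    rw [zpow_mul, ← h]
    have := conj_zpow (i := k) (a := a⁻¹) (b := c)
    rw [inv_inv] at this
    exact this.symm
  have h2 : ∀ k : ℤ, a * c ^ k * a⁻¹ = c ^ (ε * k) := by
    intro k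
    have := h1 (ε * k)
    rw [← mul_assoc, hεε, one_mul] at this
    rw [← this]; group
  rw [← Subgroup.normalizer_eq_top_iff, eq_top_iff]
  intro g _
  refine PresentedGroup.generated_by (bsRel 1 ε) _ ?_ g
  rintro (_ | _)
  · rw [Subgroup.mem_normalizer_iff]
    intro x
    constructor
    · rintro ⟨k, rfl⟩
      exact ⟨ε * k, (h2 k).symm⟩
    · rintro ⟨k, hk⟩
      refine ⟨ε * k, ?_⟩
      have hk' : c ^ k = a * x * a⁻¹ := hk
      change c ^ (ε * k) = x
      rw [← h1 k, hk']; group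
  · exact Subgroup.le_normalizer (Subgroup.mem_zpowers _)

/-- For `m > 0` and `ε = ±1`, the Baumslag–Solitar group `G(m, εm) = ⟨a, b ; a⁻¹bᵐa = b^(εm)⟩`
is the generalized free product of `L = ⟨a, c ; a⁻¹ca = c^ε⟩ = G(1, ε)` and the infinite
cyclic group `⟨b⟩` amalgamating `⟨c⟩ ≤ L` with `⟨bᵐ⟩ ≤ ⟨b⟩` via `c ↦ bᵐ`; moreover the
amalgamated subgroups `⟨c⟩` and `⟨bᵐ⟩` are normal in the respective factors.
(The element `c` of `L` is `PresentedGroup.of true`, the infinite cyclic group `⟨b⟩` is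
`Multiplicative ℤ` with `b = ofAdd 1`, so `bᵐ = ofAdd m`.) -/
theorem baumslagSolitar_eq_amalgamatedProduct (m : ℤ) (hm : 0 < m) (ε : ℤ)
    (hε : ε = 1 ∨ ε = -1)
    (ψ : ↥(Subgroup.zpowers (PresentedGroup.of true : BaumslagSolitar 1 ε)) ≃*
         ↥(Subgroup.zpowers (Multiplicative.ofAdd m : Multiplicative ℤ)))
    (hψ : ψ ⟨PresentedGroup.of true, Subgroup.mem_zpowers _⟩ =
          ⟨Multiplicative.ofAdd m, Subgroup.mem_zpowers _⟩) :
    (Subgroup.zpowers (PresentedGroup.of true : BaumslagSolitar 1 ε)).Normal ∧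
    (Subgroup.zpowers (Multiplicative.ofAdd m : Multiplicative ℤ)).Normal ∧
    Nonempty (BaumslagSolitar m (ε * m) ≃*
      AmalgamatedProduct (Subgroup.zpowers (PresentedGroup.of true : BaumslagSolitar 1 ε))
        (Subgroup.zpowers (Multiplicative.ofAdd m : Multiplicative ℤ)) ψ) := by
  refine ⟨bs_normal ε hε, inferInstance, ?_⟩
  let H := Subgroup.zpowers (PresentedGroup.of true : BaumslagSolitar 1 ε)
  let K := Subgroup.zpowers (Multiplicative.ofAdd m : Multiplicative ℤ)
  let c : H := ⟨PresentedGroup.of true, Subgroup.mem_zpowers _⟩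
  let P := AmalgamatedProduct H K ψ
  let iA : BaumslagSolitar 1 ε →* P := Monoid.PushoutI.of (φ := amalgMaps H K ψ) true
  let iB : Multiplicative ℤ →* P := Monoid.PushoutI.of (φ := amalgMaps H K ψ) false
  let b : Multiplicative ℤ := Multiplicative.ofAdd 1
  have hbm : b ^ m = Multiplicative.ofAdd m := by
    simp [b, ← ofAdd_zsmul]
  have hc : iA (PresentedGroup.of true) = iB b ^ m := by
    have e1 := Monoid.PushoutI.of_apply_eq_base (amalgMaps H K ψ) true c
    have e2 := Monoid.PushoutI.of_apply_eq_base (amalgMaps H K ψ) false c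
    have e3 : amalgMaps H K ψ false c = Multiplicative.ofAdd m := congrArg Subtype.val hψ
    rw [← map_zpow, hbm, ← e3]
    exact e1.trans e2.symm
  let F : BaumslagSolitar m (ε * m) →* P :=
    bsLift m (ε * m) (iA (PresentedGroup.of false)) (iB b) (by
      have := congrArg iA (bs_relation 1 ε)
      simp only [map_mul, map_inv, map_zpow, zpow_one] at this
      rw [hc] at this
      rw [this, ← zpow_mul, mul_comm])
  let gA : BaumslagSolitar 1 ε →* BaumslagSolitar m (ε * m) :=
    bsLift 1 ε (PresentedGroup.of false) (PresentedGroup.of true ^ m) (by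
      rw [zpow_one, bs_relation, ← zpow_mul, mul_comm])
  let gB : Multiplicative ℤ →* BaumslagSolitar m (ε * m) := zpowersHom _ (PresentedGroup.of true)
  let gg : ∀ i, amalgFactor (BaumslagSolitar 1 ε) (Multiplicative ℤ) i →*
      BaumslagSolitar m (ε * m) := fun i => match i with
    | true => gA
    | false => gB
  have hgB : gB b = PresentedGroup.of true := by simp [gB, b]
  have hgAB : gB.comp (K.subtype.comp ψ.toMonoidHom) = gA.comp H.subtype := by
    have key : gB (ψ c) = gA c := by
      have e3 : ((ψ c : K) : Multiplicative ℤ) = b ^ m := (congrArg Subtype.val hψ).trans hbm.symm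
      rw [e3, map_zpow, hgB]
      exact (bsLift_true _ _ _ _ _).symm
    ext ⟨x, hx⟩
    obtain ⟨k, rfl⟩ := hx
    have : (⟨_, ⟨k, rfl⟩⟩ : H) = c ^ k := by ext; rfl
    rw [this, map_zpow, map_zpow]
    exact congrArg (· ^ k) key
  let Gm : P →* BaumslagSolitar m (ε * m) :=
    Monoid.PushoutI.lift gg (gA.comp H.subtype) (by
      rintro (_ | _)
      · exact hgAB
      · rfl)
  have GA : ∀ x, Gm (iA x) = gA x := fun x =>
    Monoid.PushoutI.lift_of (φ := amalgMaps H K ψ) gg _ _ (i := true) x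
  have GB : ∀ x, Gm (iB x) = gB x := fun x =>
    Monoid.PushoutI.lift_of (φ := amalgMaps H K ψ) gg _ _ (i := false) x
  have Ff : F (PresentedGroup.of false) = iA (PresentedGroup.of false) := bsLift_false _ _ _ _ _
  have Ft : F (PresentedGroup.of true) = iB b := bsLift_true _ _ _ _ _
  have gAf : gA (PresentedGroup.of false) = PresentedGroup.of false := bsLift_false _ _ _ _ _
  have gAt : gA (PresentedGroup.of true) = PresentedGroup.of true ^ m := bsLift_true _ _ _ _ _
  refine ⟨MonoidHom.toMulEquiv F Gm ?_ ?_⟩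
  · apply PresentedGroup.ext
    rintro (_ | _)
    · simp only [MonoidHom.comp_apply, MonoidHom.id_apply, Ff, GA, gAf]
    · simp only [MonoidHom.comp_apply, MonoidHom.id_apply, Ft, GB, hgB]
  · have hA : (F.comp Gm).comp iA = iA := by
      apply PresentedGroup.ext
      rintro (_ | _)
      · simp only [MonoidHom.comp_apply, GA, gAf, Ff]
      · simp only [MonoidHom.comp_apply, hc, map_zpow, GB, hgB, Ft]
    have hB : (F.comp Gm).comp iB = iB := by
      apply MonoidHom.ext_mint
      change F (Gm (iB b)) = iB b
      rw [GB, hgB, Ft]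
    apply Monoid.PushoutI.hom_ext_nonempty
    rintro (_ | _)
    · exact hB
    · exact hA
end
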